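/- arXiv:1906.12037 — 3 statements merged into one kernel-verified Lean document; each statement's English description precedes it below -/
import Mathlib

section
/- Let a, b, c be pairwise distinct elements of ℂ ∖ {0,1}, and set u₁ = 1 + u + v, v₁ = a + b·u + c·v. Then there is a ℂ-algebra isomorphism between the function fields Frac(ℂ[x₁,x₂,x₃,y]/(y³ − x₁x₂x₃(1+x₁+x₂+x₃)(1+a·x₁+b·x₂+c·x₃))) and Frac(ℂ[t₁,u,v,y₁]/(y₁³·u₁v₁(v₁−u₁) − u·v·t₁(t₁+1))). In other words, the affine hypersurface X₁ ⊂ ℂ⁴ defined by y³ = x₁x₂x₃(1+x₁+x₂+x₃)(1+a·x₁+b·x₂+c·x₃) (an affine model of the cyclic triple cover of ℙ³ branched along the six hyperplanes X₀=0, X₁=0, X₂=0, X₃=0, ΣXᵢ=0, X₀+aX₁+bX₂+cX₃=0) is birationally equivalent to the affine hypersurface Y ⊂ ℂ⁴ defined by y₁³·u₁v₁(v₁−u₁) = u·v·t₁(t₁+1). -/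
/-!
Formalization conventions.

* The function field of an affine variety whose coordinate ring `ℂ[x₁,…,xₙ]/I` is an
  integral domain is formalized as `FractionRing` of that coordinate ring (for the total
  rings of fractions of the rings appearing here this is the function field).
* Two such varieties are birationally equivalent iff their function fields are
  isomorphic as `ℂ`-algebras.
-/

noncomputable section
open MvPolynomial

/-- `ω = exp(2πi/3) ∈ ℂ`, a fixed primitive cube root of unity. -/
def ω : ℂ := Complex.exp (2 * Real.pi * Complex.I / 3)

/-- Coordinate ring of the affine hypersurface `f = 0` in `ℂⁿ`. -/
abbrev HSurf {n : ℕ} (f : MvPolynomial (Fin n) ℂ) : Type :=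
  MvPolynomial (Fin n) ℂ ⧸ Ideal.span {f}

/-- Coordinate ring of the affine variety `f = g = 0` in `ℂⁿ`. -/
abbrev HSurf2 {n : ℕ} (f g : MvPolynomial (Fin n) ℂ) : Type :=
  MvPolynomial (Fin n) ℂ ⧸ Ideal.span {f, g}

/-- The image of a polynomial `p` in the function field of the hypersurface `f = 0`. -/
def cls {n : ℕ} (f : MvPolynomial (Fin n) ℂ) (p : MvPolynomial (Fin n) ℂ) :
    FractionRing (HSurf f) :=
  algebraMap (HSurf f) (FractionRing (HSurf f)) (Ideal.Quotient.mk _ p)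

/-- The image of a polynomial `p` in the function field of the variety `f = g = 0`. -/
def cls2 {n : ℕ} (f g : MvPolynomial (Fin n) ℂ) (p : MvPolynomial (Fin n) ℂ) :
    FractionRing (HSurf2 f g) :=
  algebraMap (HSurf2 f g) (FractionRing (HSurf2 f g)) (Ideal.Quotient.mk _ p)

/-- Defining polynomial of the affine hypersurface
`X₁ : y³ = x₁x₂x₃(1+x₁+x₂+x₃)(1+a·x₁+b·x₂+c·x₃)` in `ℂ⁴`
(variables: `x₁ = X 0`, `x₂ = X 1`, `x₃ = X 2`, `y = X 3`), an affine model of the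
cyclic triple cover of `ℙ³` branched along the six hyperplanes
`X₀=0, X₁=0, X₂=0, X₃=0, ΣXᵢ=0, X₀+aX₁+bX₂+cX₃=0`. -/
def pX₁ (a b c : ℂ) : MvPolynomial (Fin 4) ℂ :=
  X 3 ^ 3 - X 0 * X 1 * X 2 * (1 + X 0 + X 1 + X 2) * (1 + C a * X 0 + C b * X 1 + C c * X 2)

/-- `u₁ = 1 + u + v` (variables of `Y`: `t₁ = X 0`, `u = X 1`, `v = X 2`, `y₁ = X 3`). -/
def u₁Y : MvPolynomial (Fin 4) ℂ := 1 + X 1 + X 2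

/-- `v₁ = a + b·u + c·v`. -/
def v₁Y (a b c : ℂ) : MvPolynomial (Fin 4) ℂ := C a + C b * X 1 + C c * X 2

/-- Defining polynomial of the affine hypersurface `Y : y₁³·u₁v₁(v₁−u₁) = u·v·t₁(t₁+1)`. -/
def pY (a b c : ℂ) : MvPolynomial (Fin 4) ℂ :=
  X 3 ^ 3 * u₁Y * v₁Y a b c * (v₁Y a b c - u₁Y) - X 1 * X 2 * X 0 * (X 0 + 1)


section Helpers

lemma hs_nv_add {i : Fin 4} {f g : MvPolynomial (Fin 4) ℂ} (hf : i ∉ f.vars) (hg : i ∉ g.vars) :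
    i ∉ (f + g).vars := fun h => by
  rcases Finset.mem_union.1 (vars_add_subset f g h) with h | h
  exacts [hf h, hg h]

lemma hs_nv_mul {i : Fin 4} {f g : MvPolynomial (Fin 4) ℂ} (hf : i ∉ f.vars) (hg : i ∉ g.vars) :
    i ∉ (f * g).vars := fun h => by
  rcases Finset.mem_union.1 (vars_mul f g h) with h | h
  exacts [hf h, hg h]

lemma hs_nv_C {i : Fin 4} (r : ℂ) : i ∉ (C r : MvPolynomial (Fin 4) ℂ).vars := by simp

lemma hs_nv_X {i j : Fin 4} (h : i ≠ j) : i ∉ (X j : MvPolynomial (Fin 4) ℂ).vars := by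
  simp [vars_X, h]

/-- Linear polynomials in which the variable `X 2` occurs are irreducible. -/
lemma hs_irr_lin (α β γ δ : ℂ) (hγ : γ ≠ 0) :
    Irreducible (C γ * X 2 + (C δ + C α * X 0 + C β * X 1) : MvPolynomial (Fin 4) ℂ) := by
  apply irreducible_mul_X_add
  · simpa using hγ
  · exact hs_nv_C _
  · exact hs_nv_add (hs_nv_add (hs_nv_C _) (hs_nv_mul (hs_nv_C _) (hs_nv_X (by decide))))
      (hs_nv_mul (hs_nv_C _) (hs_nv_X (by decide)))
  · have : IsUnit (C γ : MvPolynomial (Fin 4) ℂ) := (IsUnit.mk0 γ hγ).map C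
    exact this.isRelPrime_left

/-- An irreducible polynomial not vanishing on the hypersurface is a nonzerodivisor on it. -/
lemma hs_nzd (L p : MvPolynomial (Fin 4) ℂ) (hL : Irreducible L) (z : Fin 4 → ℂ)
    (h0 : eval z L = 0) (hp : eval z p ≠ 0) :
    (Ideal.Quotient.mk (Ideal.span {p}) L) ∈ nonZeroDivisors (HSurf p) := by
  have hprime : Prime L := hL.prime
  have hnd : ¬ L ∣ p := by
    rintro ⟨k, rfl⟩
    simp [h0] at hp
  have hp0 : p ≠ 0 := by rintro rfl; simp at hp
  rw [mem_nonZeroDivisors_iff_right]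
  intro x hx
  obtain ⟨g, rfl⟩ := Ideal.Quotient.mk_surjective x
  rw [← map_mul, Ideal.Quotient.eq_zero_iff_mem, Ideal.mem_span_singleton] at hx
  rw [Ideal.Quotient.eq_zero_iff_mem, Ideal.mem_span_singleton]
  obtain ⟨h, hh⟩ := hx
  have : L ∣ p * h := ⟨g, by rw [← hh]; ring⟩
  obtain ⟨k, rfl⟩ := (hprime.dvd_or_dvd this).resolve_left hnd
  refine ⟨k, ?_⟩
  apply mul_right_cancel₀ hL.ne_zero
  rw [hh]; ring

/-- The localized coordinate ring. -/
abbrev HLoc (p s : MvPolynomial (Fin 4) ℂ) : Type :=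
  Localization.Away (Ideal.Quotient.mk (Ideal.span {p}) s)

/-- The canonical map from the polynomial ring. -/
def hι (p s : MvPolynomial (Fin 4) ℂ) : MvPolynomial (Fin 4) ℂ →ₐ[ℂ] HLoc p s :=
  (IsScalarTower.toAlgHom ℂ (HSurf p) (HLoc p s)).comp (Ideal.Quotient.mkₐ ℂ (Ideal.span {p}))

lemma hι_p (p s : MvPolynomial (Fin 4) ℂ) : hι p s p = 0 := by
  have : Ideal.Quotient.mk (Ideal.span {p}) p = 0 :=
    Ideal.Quotient.eq_zero_iff_mem.2 (Ideal.mem_span_singleton_self p)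
  simp [hι, this]

lemma hι_s (p s : MvPolynomial (Fin 4) ℂ) : IsUnit (hι p s s) :=
  IsLocalization.Away.algebraMap_isUnit (S := HLoc p s) (Ideal.Quotient.mk (Ideal.span {p}) s)

lemma hs_lift (p s : MvPolynomial (Fin 4) ℂ) {R : Type} [CommRing R] [Algebra ℂ R]
    (z : Fin 4 → R) (hp : aeval z p = 0) (hs : IsUnit (aeval z s)) :
    ∃ F : HLoc p s →ₐ[ℂ] R, ∀ g, F (hι p s g) = aeval z g := by
  let f : HSurf p →ₐ[ℂ] R := Ideal.Quotient.liftₐ (Ideal.span {p}) (aeval z) (by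
    intro a ha
    obtain ⟨k, rfl⟩ := Ideal.mem_span_singleton.1 ha
    simp [hp])
  have hf : ∀ g, f (Ideal.Quotient.mk _ g) = aeval z g := fun g => rfl
  refine ⟨IsLocalization.Away.liftAlgHom (f := f) (Ideal.Quotient.mk (Ideal.span {p}) s) hs, ?_⟩
  intro g
  rw [← hf g]
  exact IsLocalization.Away.lift_eq (g := f.toRingHom) _ hs _

lemma hs_ext (p s : MvPolynomial (Fin 4) ℂ) {R : Type} [CommRing R] [Algebra ℂ R]
    (F G : HLoc p s →ₐ[ℂ] R) (h : ∀ i, F (hι p s (X i)) = G (hι p s (X i))) : F = G := by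
  have h1 : F.comp (hι p s) = G.comp (hι p s) := MvPolynomial.algHom_ext h
  apply AlgHom.coe_ringHom_injective
  apply IsLocalization.ringHom_ext (Submonoid.powers (Ideal.Quotient.mk (Ideal.span {p}) s))
  apply Ideal.Quotient.ringHom_ext
  exact congrArg (fun k : MvPolynomial (Fin 4) ℂ →ₐ[ℂ] R => (k : MvPolynomial (Fin 4) ℂ →+* R)) h1

lemma hs_frac {A B : Type} [CommRing A] [CommRing B] [Algebra ℂ A] [Algebra ℂ B] (s : A) (t : B)
    (hs : s ∈ nonZeroDivisors A) (ht : t ∈ nonZeroDivisors B)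
    (e : Localization.Away s ≃ₐ[ℂ] Localization.Away t) :
    Nonempty (FractionRing A ≃ₐ[ℂ] FractionRing B) := by
  have key : ∀ {A : Type} [CommRing A] [Algebra ℂ A] (s : A) (_ : s ∈ nonZeroDivisors A),
      ∃ (i : Algebra (Localization.Away s) (FractionRing A)),
        IsFractionRing (Localization.Away s) (FractionRing A) ∧
        IsScalarTower ℂ (Localization.Away s) (FractionRing A) := by
    intro A _ _ s hs
    have hle : Submonoid.powers s ≤ nonZeroDivisors A := by
      rwa [Submonoid.powers_le]
    have hu : IsUnit (algebraMap A (FractionRing A) s) :=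
      IsLocalization.map_units (FractionRing A) (⟨s, hs⟩ : nonZeroDivisors A)
    letI i : Algebra (Localization.Away s) (FractionRing A) :=
      (IsLocalization.Away.lift (S := Localization.Away s) s hu).toAlgebra
    have t1 : IsScalarTower A (Localization.Away s) (FractionRing A) :=
      IsScalarTower.of_algebraMap_eq fun x => (IsLocalization.Away.lift_eq s hu x).symm
    refine ⟨i, ?_, ?_⟩
    · exact IsFractionRing.isFractionRing_of_isLocalization (Submonoid.powers s) _ _ hle
    · refine IsScalarTower.of_algebraMap_eq fun x => ?_
      rw [IsScalarTower.algebraMap_apply ℂ A (Localization.Away s),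
        ← IsScalarTower.algebraMap_apply A (Localization.Away s) (FractionRing A),
        ← IsScalarTower.algebraMap_apply ℂ A (FractionRing A)]
  obtain ⟨i1, f1, t1⟩ := key s hs
  obtain ⟨i2, f2, t2⟩ := key t ht
  exact ⟨IsFractionRing.algEquivOfAlgEquiv e⟩

/-- Denominators on `X₁`. -/
def sX (a b c : ℂ) : MvPolynomial (Fin 4) ℂ :=
  X 0 * (X 0 + X 1 + X 2) * (C a * X 0 + C b * X 1 + C c * X 2) *
    (C (a - 1) * X 0 + C (b - 1) * X 1 + C (c - 1) * X 2)

/-- Denominators on `Y`. -/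
def sY (a b c : ℂ) : MvPolynomial (Fin 4) ℂ :=
  u₁Y * v₁Y a b c * (v₁Y a b c - u₁Y) * ((u₁Y - v₁Y a b c) * X 0 - v₁Y a b c)

lemma sX_nzd (a b c : ℂ) (hc0 : c ≠ 0) (hc1 : c ≠ 1) :
    Ideal.Quotient.mk (Ideal.span {pX₁ a b c}) (sX a b c) ∈ nonZeroDivisors (HSurf (pX₁ a b c)) := by
  have hp : eval (![0, 0, 0, 1] : Fin 4 → ℂ) (pX₁ a b c) ≠ 0 := by simp [pX₁]
  unfold sX
  rw [map_mul, map_mul, map_mul]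
  refine mul_mem (mul_mem (mul_mem ?_ ?_) ?_) ?_
  · exact hs_nzd _ _ (MvPolynomial.X_prime).irreducible _ (by simp) hp
  · refine hs_nzd _ _ ?_ _ (by simp) hp
    convert hs_irr_lin 1 1 1 0 one_ne_zero using 1
    simp only [map_one, map_zero]; ring
  · refine hs_nzd _ _ ?_ _ (by simp) hp
    convert hs_irr_lin a b c 0 hc0 using 1
    simp only [map_zero]; ring
  · refine hs_nzd _ _ ?_ _ (by simp) hp
    convert hs_irr_lin (a - 1) (b - 1) (c - 1) 0 (sub_ne_zero.2 hc1) using 1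
    simp only [map_zero]; ring

lemma hs_pt (a b c : ℂ) (ha : a ≠ 0) (hb : b ≠ 0) (hc : c ≠ 0) :
    ∃ u v : ℂ, u ≠ 0 ∧ v ≠ 0 ∧ a + b * u + c * v = 0 := by
  by_cases h : a + b = 0
  · refine ⟨2, -(a + b * 2) / c, by norm_num, ?_, by field_simp; ring⟩
    have : a + b * 2 = b := by linear_combination h
    rw [this]
    exact div_ne_zero (neg_ne_zero.2 hb) hc
  · refine ⟨1, -(a + b) / c, one_ne_zero, div_ne_zero (neg_ne_zero.2 h) hc, by field_simp; ring⟩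

lemma sY_nzd (a b c : ℂ) (ha0 : a ≠ 0) (ha1 : a ≠ 1) (hb0 : b ≠ 0) (hb1 : b ≠ 1)
    (hc0 : c ≠ 0) (hc1 : c ≠ 1) (hac : a ≠ c) :
    Ideal.Quotient.mk (Ideal.span {pY a b c}) (sY a b c) ∈ nonZeroDivisors (HSurf (pY a b c)) := by
  have iv : Irreducible (v₁Y a b c - u₁Y) := by
    convert hs_irr_lin 0 (b - 1) (c - 1) (a - 1) (sub_ne_zero.2 hc1) using 1
    simp only [map_zero, map_sub, map_one, v₁Y, u₁Y]; ring
  unfold sY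
  rw [map_mul, map_mul, map_mul]
  refine mul_mem (mul_mem (mul_mem ?_ ?_) ?_) ?_
  · refine hs_nzd _ _ ?_ ![1, 1, -2, 0] ?_ ?_
    · convert hs_irr_lin 0 1 1 1 one_ne_zero using 1
      simp only [map_zero, map_one, u₁Y]; ring
    · simp [u₁Y]; norm_num
    · simp [pY]
  · obtain ⟨u, v, hu, hv, h⟩ := hs_pt a b c ha0 hb0 hc0
    refine hs_nzd _ _ ?_ ![1, u, v, 0] ?_ ?_
    · convert hs_irr_lin 0 b c a hc0 using 1
      simp only [map_zero, v₁Y]; ring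
    · simpa [v₁Y] using h
    · simp [pY, hu, hv]
  · obtain ⟨u, v, hu, hv, h⟩ := hs_pt (a - 1) (b - 1) (c - 1) (sub_ne_zero.2 ha1)
      (sub_ne_zero.2 hb1) (sub_ne_zero.2 hc1)
    refine hs_nzd _ _ iv ![1, u, v, 0] ?_ ?_
    · simp [v₁Y, u₁Y]; linear_combination h
    · simp [pY, hu, hv]
  · obtain ⟨v, hv⟩ := Infinite.exists_notMem_finset ({-1, -a / c, (1 - a) / (c - 1)} : Finset ℂ)
    simp only [Finset.mem_insert, Finset.mem_singleton, not_or] at hv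
    obtain ⟨h1, h2, h3⟩ := hv
    have hc1' := sub_ne_zero.2 hc1
    have k1 : 1 + v ≠ 0 := fun h => h1 (by linear_combination h)
    have k2 : a + c * v ≠ 0 := fun h => h2 (by field_simp; linear_combination h)
    have k3 : (a + c * v) - (1 + v) ≠ 0 := fun h => h3 (by field_simp; linear_combination h)
    have k4 : (1 + v) - (a + c * v) ≠ 0 := fun h => k3 (by linear_combination -h)
    refine hs_nzd _ _ ?_ ![(a + c * v) / ((1 + v) - (a + c * v)), 0, v, 1] ?_ ?_
    · have : (u₁Y - v₁Y a b c) * X 0 - v₁Y a b c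
          = (u₁Y - v₁Y a b c) * X 0 + (-v₁Y a b c) := by ring
      rw [this]
      have e1 : u₁Y - v₁Y a b c = C (1 - a) + C (1 - b) * X 1 + C (1 - c) * X 2 := by
        simp only [map_sub, map_one, v₁Y, u₁Y]; ring
      have e2 : - v₁Y a b c = C (-a) + C (-b) * X 1 + C (-c) * X 2 := by
        simp only [map_neg, v₁Y]; ring
      have nv : ∀ α β γ : ℂ,
          (0 : Fin 4) ∉ (C α + C β * X 1 + C γ * X 2 : MvPolynomial (Fin 4) ℂ).vars :=
        fun α β γ => hs_nv_add
          (hs_nv_add (hs_nv_C _) (hs_nv_mul (hs_nv_C _) (hs_nv_X (by decide))))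
          (hs_nv_mul (hs_nv_C _) (hs_nv_X (by decide)))
      have iu : Irreducible (u₁Y - v₁Y a b c) := by
        rw [← neg_sub]; exact (Associated.neg_left (Associated.refl _)).irreducible_iff.2 iv
      apply irreducible_mul_X_add
      · exact iu.ne_zero
      · rw [e1]; exact nv _ _ _
      · rw [e2]; exact nv _ _ _
      · rw [iu.isRelPrime_iff_not_dvd, dvd_neg]
        rintro ⟨k, hk⟩
        have hk' := congrArg (eval (![0, 0, (a - 1) / (1 - c), 0] : Fin 4 → ℂ)) hk
        have hc2 : 1 - c ≠ 0 := sub_ne_zero.2 (Ne.symm hc1)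
        have z : eval (![0, 0, (a - 1) / (1 - c), 0] : Fin 4 → ℂ) (u₁Y - v₁Y a b c) = 0 := by
          simp [u₁Y, v₁Y]; field_simp; ring
        rw [map_mul, z, zero_mul] at hk'
        simp [v₁Y] at hk'
        field_simp at hk'
        apply hac
        linear_combination hk'
    · simp [u₁Y, v₁Y]; rw [mul_div_cancel₀ _ k4, sub_self]
    · simp [u₁Y, v₁Y, pY]; exact ⟨⟨k1, k2⟩, k3⟩

/-- The core computation, with the localized coordinate rings given by their universal property. -/
lemma hs_core (a b c : ℂ) (RX RY : Type) [CommRing RX] [CommRing RY] [Algebra ℂ RX] [Algebra ℂ RY]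
    (jX : MvPolynomial (Fin 4) ℂ →ₐ[ℂ] RX) (jY : MvPolynomial (Fin 4) ℂ →ₐ[ℂ] RY)
    (hpX : jX (pX₁ a b c) = 0) (hsX : IsUnit (jX (sX a b c)))
    (hpY : jY (pY a b c) = 0) (hsY : IsUnit (jY (sY a b c)))
    (liftX : ∀ z : Fin 4 → RY, aeval z (pX₁ a b c) = 0 → IsUnit (aeval z (sX a b c)) →
      ∃ F : RX →ₐ[ℂ] RY, ∀ g, F (jX g) = aeval z g)
    (liftY : ∀ z : Fin 4 → RX, aeval z (pY a b c) = 0 → IsUnit (aeval z (sY a b c)) →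
      ∃ F : RY →ₐ[ℂ] RX, ∀ g, F (jY g) = aeval z g)
    (extX : ∀ F G : RX →ₐ[ℂ] RX, (∀ i, F (jX (X i)) = G (jX (X i))) → F = G)
    (extY : ∀ F G : RY →ₐ[ℂ] RY, (∀ i, F (jY (X i)) = G (jY (X i))) → F = G) :
    Nonempty (RX ≃ₐ[ℂ] RY) := by
  simp only [pX₁, sX, pY, sY, u₁Y, v₁Y, map_mul, map_add, map_sub, map_pow, map_one, algHom_C,
    aeval_X, IsUnit.mul_iff] at hpX hsX hpY hsY liftX liftY
  -- the map `RX → RY`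
  obtain ⟨F, x, hx, F0, F1, F2, F3⟩ : ∃ (F : RX →ₐ[ℂ] RY) (x : RY),
      x * (algebraMap ℂ RY a + algebraMap ℂ RY b * jY (X 1) + algebraMap ℂ RY c * jY (X 2)) *
        (1 + jY (X 1) + jY (X 2)) =
        ((1 + jY (X 1) + jY (X 2)) -
          (algebraMap ℂ RY a + algebraMap ℂ RY b * jY (X 1) + algebraMap ℂ RY c * jY (X 2))) *
          jY (X 0) -
          (algebraMap ℂ RY a + algebraMap ℂ RY b * jY (X 1) + algebraMap ℂ RY c * jY (X 2)) ∧
      F (jX (X 0)) = x ∧ F (jX (X 1)) = x * jY (X 1) ∧ F (jX (X 2)) = x * jY (X 2) ∧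
      F (jX (X 3)) = x * ((algebraMap ℂ RY a + algebraMap ℂ RY b * jY (X 1) +
        algebraMap ℂ RY c * jY (X 2)) - (1 + jY (X 1) + jY (X 2))) * jY (X 3) := by
    clear extX extY liftY hpX hsX
    generalize jY (X 0) = t at *
    generalize jY (X 1) = u at *
    generalize jY (X 2) = v at *
    generalize jY (X 3) = y at *
    obtain ⟨U, hU⟩ : ∃ U, U = 1 + u + v := ⟨_, rfl⟩
    obtain ⟨V, hV⟩ : ∃ V, V = algebraMap ℂ RY a + algebraMap ℂ RY b * u + algebraMap ℂ RY c * v :=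
      ⟨_, rfl⟩
    rw [← hU, ← hV] at hpY hsY ⊢
    obtain ⟨⟨⟨h1, h2⟩, h3⟩, h4⟩ := hsY
    obtain ⟨i1, hi1⟩ := h1.exists_right_inv
    obtain ⟨i2, hi2⟩ := h2.exists_right_inv
    have ui1 : IsUnit i1 := .of_mul_eq_one_right _ hi1
    have ui2 : IsUnit i2 := .of_mul_eq_one_right _ hi2
    obtain ⟨x, hxd⟩ : ∃ x, x = i1 * i2 * ((U - V) * t - V) := ⟨_, rfl⟩
    have ux : IsUnit x := by rw [hxd]; exact (ui1.mul ui2).mul h4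
    have hx : x * V * U = (U - V) * t - V := by
      rw [hxd]
      linear_combination ((U - V) * t - V) * (V * i2) * hi1 + ((U - V) * t - V) * hi2
    have e1 : x + x * u + x * v = x * U := by rw [hU]; ring
    have e2 : algebraMap ℂ RY a * x + algebraMap ℂ RY b * (x * u) + algebraMap ℂ RY c * (x * v)
        = x * V := by rw [hV]; ring
    have e3 : (algebraMap ℂ RY a - 1) * x + (algebraMap ℂ RY b - 1) * (x * u) +
        (algebraMap ℂ RY c - 1) * (x * v) = x * (V - U) := by
      linear_combination e2 - e1
    obtain ⟨F, hF⟩ := liftX ![x, x * u, x * v, x * (V - U) * y] (by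
      simp only [Matrix.cons_val]
      have e1' : 1 + x + x * u + x * v = 1 + x * U := by linear_combination e1
      have e2' : 1 + algebraMap ℂ RY a * x + algebraMap ℂ RY b * (x * u) +
        algebraMap ℂ RY c * (x * v) = 1 + x * V := by linear_combination e2
      rw [e1', e2']
      apply (h1.mul h2).mul_left_cancel
      have f1 : V * (1 + x * U) = (U - V) * t := by linear_combination hx
      have f2 : U * (1 + x * V) = (U - V) * (t + 1) := by linear_combination hx
      linear_combination x ^ 3 * (V - U) ^ 2 * hpY - x ^ 3 * u * v * (U * (1 + x * V)) * f1
        - x ^ 3 * u * v * (U - V) * t * f2) (by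
      simp only [Matrix.cons_val]
      rw [e1, e2, e3]
      exact ⟨⟨⟨ux, ux.mul h1⟩, ux.mul h2⟩, ux.mul h3⟩)
    refine ⟨F, x, hx, ?_, ?_, ?_, ?_⟩ <;> rw [hF, aeval_X] <;> rfl
  -- the map `RY → RX`
  obtain ⟨G, i, w, hi, hw, G0, G1, G2, G3⟩ : ∃ (G : RY →ₐ[ℂ] RX) (i w : RX),
      jX (X 0) * i = 1 ∧
      ((algebraMap ℂ RX a - 1) * jX (X 0) + (algebraMap ℂ RX b - 1) * jX (X 1) +
        (algebraMap ℂ RX c - 1) * jX (X 2)) * w = 1 ∧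
      G (jY (X 0)) = - ((1 + (jX (X 0) + jX (X 1) + jX (X 2))) * (algebraMap ℂ RX a * jX (X 0) +
        algebraMap ℂ RX b * jX (X 1) + algebraMap ℂ RX c * jX (X 2)) * w) ∧
      G (jY (X 1)) = jX (X 1) * i ∧ G (jY (X 2)) = jX (X 2) * i ∧
      G (jY (X 3)) = jX (X 3) * w := by
    clear extX extY liftX hpY hsY F0 F1 F2 F3 hx
    generalize jX (X 0) = p at *
    generalize jX (X 1) = q at *
    generalize jX (X 2) = r at *
    generalize jX (X 3) = y at *
    obtain ⟨L, hL⟩ : ∃ L, L = p + q + r := ⟨_, rfl⟩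
    obtain ⟨M, hM⟩ : ∃ M, M = algebraMap ℂ RX a * p + algebraMap ℂ RX b * q +
      algebraMap ℂ RX c * r := ⟨_, rfl⟩
    have hN : (algebraMap ℂ RX a - 1) * p + (algebraMap ℂ RX b - 1) * q +
      (algebraMap ℂ RX c - 1) * r = M - L := by rw [hL, hM]; ring
    have e1 : 1 + p + q + r = 1 + L := by rw [hL]; ring
    have e2 : 1 + algebraMap ℂ RX a * p + algebraMap ℂ RX b * q + algebraMap ℂ RX c * r
      = 1 + M := by rw [hM]; ring
    rw [e1, e2] at hpX
    rw [hN, ← hL, ← hM] at hsX ⊢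
    obtain ⟨⟨⟨h1, h2⟩, h3⟩, h4⟩ := hsX
    obtain ⟨i, hi⟩ := h1.exists_right_inv
    obtain ⟨w, hw⟩ := h4.exists_right_inv
    have ui : IsUnit i := .of_mul_eq_one_right _ hi
    have d1 : 1 + q * i + r * i = L * i := by rw [hL]; linear_combination -hi
    have d2 : algebraMap ℂ RX a + algebraMap ℂ RX b * (q * i) + algebraMap ℂ RX c * (r * i)
      = M * i := by rw [hM]; linear_combination -(algebraMap ℂ RX a) * hi
    obtain ⟨G, hG⟩ := liftY ![-((1 + L) * M * w), q * i, r * i, y * w] (by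
      simp only [Matrix.cons_val]
      rw [d1, d2]
      have d3 : -((1 + L) * M * w) + 1 = - (L * (1 + M) * w) := by linear_combination -hw
      rw [d3]
      linear_combination (y ^ 3 * w ^ 2 * L * M * i ^ 3) * hw + w ^ 2 * L * M * i ^ 3 * hpX
        + w ^ 2 * L * M * i ^ 2 * q * r * (1 + L) * (1 + M) * hi) (by
      simp only [Matrix.cons_val]
      rw [d1, d2]
      have d4 : M * i - L * i = (M - L) * i := by ring
      have d5 : (L * i - M * i) * (-((1 + L) * M * w)) - M * i = L * M * i := by
        linear_combination i * (1 + L) * M * hw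
      rw [d4, d5]
      exact ⟨⟨⟨h2.mul ui, h3.mul ui⟩, h4.mul ui⟩, (h2.mul h3).mul ui⟩)
    refine ⟨G, i, w, hi, hw, ?_, ?_, ?_, ?_⟩ <;> rw [hG, aeval_X] <;> rfl
  have FG : F.comp G = AlgHom.id ℂ RY := by
    apply extY
    have hi' := congrArg F hi
    have hw' := congrArg F hw
    simp only [map_mul, map_add, map_sub, map_one, AlgHom.commutes, F0, F1, F2] at hi' hw'
    intro k
    fin_cases k <;> simp only [Fin.zero_eta, Fin.mk_one, Fin.reduceFinMk, AlgHom.comp_apply,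
      AlgHom.id_apply, G0, G1, G2, G3, map_mul, map_add, map_neg, map_one, AlgHom.commutes,
      F0, F1, F2, F3]
    · linear_combination jY (X 0) * hw' - x * F w * hx
    · linear_combination jY (X 1) * hi'
    · linear_combination jY (X 2) * hi'
    · linear_combination jY (X 3) * hw'
  have GF : G.comp F = AlgHom.id ℂ RX := by
    apply extX
    have hx' := congrArg G hx
    simp only [map_mul, map_add, map_sub, map_one, AlgHom.commutes, G0, G1, G2] at hx'
    have hGx : G x = jX (X 0) := by
      obtain ⟨⟨⟨h1, h2⟩, h3⟩, h4⟩ := hsX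
      have ui : IsUnit i := .of_mul_eq_one_right _ hi
      apply ((h3.mul h2).mul (ui.mul ui)).mul_left_cancel
      have d1 : 1 + jX (X 1) * i + jX (X 2) * i = (jX (X 0) + jX (X 1) + jX (X 2)) * i := by
        linear_combination -hi
      have d2 : algebraMap ℂ RX a + algebraMap ℂ RX b * (jX (X 1) * i) +
          algebraMap ℂ RX c * (jX (X 2) * i) = (algebraMap ℂ RX a * jX (X 0) +
          algebraMap ℂ RX b * jX (X 1) + algebraMap ℂ RX c * jX (X 2)) * i := by
        linear_combination -(algebraMap ℂ RX a) * hi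
      rw [d1, d2] at hx'
      obtain ⟨L, hL⟩ : ∃ L, L = jX (X 0) + jX (X 1) + jX (X 2) := ⟨_, rfl⟩
      obtain ⟨M, hM⟩ : ∃ M, M = algebraMap ℂ RX a * jX (X 0) +
          algebraMap ℂ RX b * jX (X 1) + algebraMap ℂ RX c * jX (X 2) := ⟨_, rfl⟩
      have hw2 : (M - L) * w = 1 := by rw [← hw, hM, hL]; ring
      rw [← hL, ← hM] at hx' ⊢
      linear_combination hx' + i * (1 + L) * M * hw2 - M * L * i * hi
    intro k
    fin_cases k <;> simp only [Fin.zero_eta, Fin.mk_one, Fin.reduceFinMk, AlgHom.comp_apply,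
      AlgHom.id_apply, G1, G2, G3, map_mul, map_add, map_sub, map_one, AlgHom.commutes,
      F0, F1, F2, F3, hGx]
    · linear_combination jX (X 1) * hi
    · linear_combination jX (X 2) * hi
    · linear_combination jX (X 3) * hw + jX (X 3) * w * ((algebraMap ℂ RX b - 1) * jX (X 1) +
        (algebraMap ℂ RX c - 1) * jX (X 2)) * hi
  exact ⟨AlgEquiv.ofAlgHom F G FG GF⟩

lemma hs_equiv (a b c : ℂ) :
    Nonempty (HLoc (pX₁ a b c) (sX a b c) ≃ₐ[ℂ] HLoc (pY a b c) (sY a b c)) :=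
  hs_core a b c _ _ (hι _ _) (hι _ _) (hι_p _ _) (hι_s _ _) (hι_p _ _) (hι_s _ _)
    (fun z => hs_lift _ _ z) (fun z => hs_lift _ _ z) (hs_ext _ _) (hs_ext _ _)

end Helpers

/-- For pairwise distinct `a, b, c ∈ ℂ ∖ {0,1}`, the function fields of
the affine hypersurfaces `X₁` and `Y` are isomorphic as `ℂ`-algebras; i.e. `X₁` and `Y`
are birationally equivalent. -/
theorem stmt0 (a b c : ℂ) (ha0 : a ≠ 0) (ha1 : a ≠ 1) (hb0 : b ≠ 0) (hb1 : b ≠ 1)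
    (hc0 : c ≠ 0) (hc1 : c ≠ 1) (hab : a ≠ b) (hac : a ≠ c) (hbc : b ≠ c) :
    Nonempty (FractionRing (HSurf (pX₁ a b c)) ≃ₐ[ℂ] FractionRing (HSurf (pY a b c))) := by
  obtain ⟨e⟩ := hs_equiv a b c
  exact hs_frac _ _ (sX_nzd a b c hc0 hc1) (sY_nzd a b c ha0 ha1 hb0 hb1 hc0 hc1 hac) e
end
end

section
/- Let a, b, c be pairwise distinct elements of ℂ ∖ {0,1}, and set u₁ = 1 + u + v, v₁ = a + b·u + c·v. Let A = ℂ[w,u,v,t₁,x]/(w³·u₁v₁(v₁−u₁) − u·v, x³ − t₁(t₁+1)) be the coordinate ring of the product S × F₁ of the affine surface S: w³·u₁v₁(v₁−u₁) = u·v and the affine curve F₁: x³ = t₁(t₁+1), let K = Frac(A), and let σ be the ℂ-algebra automorphism of K of order 3 determined by σ(w) = ω²·w, σ(x) = ω·x, σ(u) = u, σ(v) = v, σ(t₁) = t₁ (the diagonal G = ℤ/3ℤ action). Then the fixed field K^σ is isomorphic as a ℂ-algebra to Frac(ℂ[t₁,u,v,y₁]/(y₁³·u₁v₁(v₁−u₁)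 − u·v·t₁(t₁+1))), an isomorphism being induced by y₁ ↦ w·x. In other words, the affine hypersurface Y: y₁³·u₁v₁(v₁−u₁) = u·v·t₁(t₁+1) is birationally equivalent to the quotient (S × F₁)/G. -/
/-!
Formalization conventions.

* The function field of an affine variety whose coordinate ring `ℂ[x₁,…,xₙ]/I` is an
  integral domain is formalized as `FractionRing` of that coordinate ring (for the total
  rings of fractions of the rings appearing here this is the function field).
* Two such varieties are birationally equivalent iff their function fields are
  isomorphic as `ℂ`-algebras.
-/

noncomputable section
open MvPolynomial

/-- `u₁ = 1 + u + v` in the coordinates of `S × F₁`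
(`w = X 0`, `u = X 1`, `v = X 2`, `t₁ = X 3`, `x = X 4`). -/
def u₁5 : MvPolynomial (Fin 5) ℂ := 1 + X 1 + X 2

/-- `v₁ = a + b·u + c·v`. -/
def v₁5 (a b c : ℂ) : MvPolynomial (Fin 5) ℂ := C a + C b * X 1 + C c * X 2

/-- Defining polynomial of the surface `S : w³·u₁v₁(v₁−u₁) = u·v`, as an equation in `ℂ⁵`. -/
def pS5 (a b c : ℂ) : MvPolynomial (Fin 5) ℂ :=
  X 0 ^ 3 * u₁5 * v₁5 a b c * (v₁5 a b c - u₁5) - X 1 * X 2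

/-- Defining polynomial of the curve `F₁ : x³ = t₁(t₁+1)`, as an equation in `ℂ⁵`. -/
def pF₁5 : MvPolynomial (Fin 5) ℂ := X 4 ^ 3 - X 3 * (X 3 + 1)

lemma poly_degree {R : Type*} [CommRing R] (D N : R) (hD : D ≠ 0) :
    (Polynomial.C D * Polynomial.X ^ 3 - Polynomial.C N : Polynomial R).natDegree = 3 := by
  compute_degree!

lemma prime_cubic {R : Type*} [CommRing R] [IsDomain R] [UniqueFactorizationMonoid R]
    (D N q : R) (hq : Prime q) (hqD : ¬ q ∣ D) (hqN : q ∣ N) (hqN2 : ¬ q ^ 2 ∣ N)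
    (hrel : IsRelPrime D N) :
    (Polynomial.C D * Polynomial.X ^ 3 - Polynomial.C N : Polynomial R).IsPrimitive ∧
    Irreducible (Polynomial.C D * Polynomial.X ^ 3 - Polynomial.C N : Polynomial R) := by
  have hD : D ≠ 0 := by rintro rfl; exact hqD (dvd_zero _)
  set F := (Polynomial.C D * Polynomial.X ^ 3 - Polynomial.C N : Polynomial R) with hF
  have hdeg : F.natDegree = 3 := poly_degree D N hD
  have hF0 : F ≠ 0 := by intro h; rw [h] at hdeg; simp at hdeg
  have hdeg' : F.degree = 3 := by rw [Polynomial.degree_eq_natDegree hF0, hdeg]; rfl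
  have c3 : F.coeff 3 = D := by simp [hF]
  have c0 : F.coeff 0 = -N := by simp [hF]
  have hprim : F.IsPrimitive := by
    intro r hr
    rw [Polynomial.C_dvd_iff_dvd_coeff] at hr
    have h3 := hr 3
    have h0 := hr 0
    rw [c3] at h3
    rw [c0, dvd_neg] at h0
    exact hrel h3 h0
  refine ⟨hprim, ?_⟩
  refine Polynomial.irreducible_of_eisenstein_criterion (P := Ideal.span {q})
    ((Ideal.span_singleton_prime hq.ne_zero).2 hq) ?_ ?_ ?_ ?_ hprim
  · rw [Polynomial.leadingCoeff, hdeg, c3, Ideal.mem_span_singleton]; exact hqD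
  · intro n hn
    rw [hdeg'] at hn
    have hn : n < 3 := by exact_mod_cast hn
    rw [Ideal.mem_span_singleton]
    interval_cases n
    · rw [c0]; exact (dvd_neg).2 hqN
    · simp [hF]
    · simp [hF]
  · rw [hdeg']; norm_num
  · rw [c0, Ideal.span_singleton_pow, Ideal.mem_span_singleton, dvd_neg]; exact hqN2

/-- Kernel of evaluation at a root of `D X^3 - N`. -/
lemma cubic_dvd {R : Type*} [CommRing R] [IsDomain R] [UniqueFactorizationMonoid R]
    {Ω : Type*} [Field Ω] (i : R →+* Ω) (hi : Function.Injective i) (z : Ω)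
    (D N q : R) (hq : Prime q) (hqD : ¬ q ∣ D) (hqN : q ∣ N) (hqN2 : ¬ q ^ 2 ∣ N)
    (hrel : IsRelPrime D N) (hz : i D * z ^ 3 = i N) (p : Polynomial R)
    (hp : p.eval₂ i z = 0) :
    (Polynomial.C D * Polynomial.X ^ 3 - Polynomial.C N : Polynomial R) ∣ p := by
  obtain ⟨hprim, hirr⟩ := prime_cubic D N q hq hqD hqN hqN2 hrel
  have hD : D ≠ 0 := by rintro rfl; exact hqD (dvd_zero _)
  have hdeg := poly_degree D N hD
  set F := (Polynomial.C D * Polynomial.X ^ 3 - Polynomial.C N : Polynomial R) with hF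
  let k := FractionRing R
  let j : k →+* Ω := IsFractionRing.lift hi
  have hj : j.comp (algebraMap R k) = i := by
    ext r; simp [j]
  let _ : Algebra k Ω := j.toAlgebra
  have hev : ∀ s : Polynomial R, Polynomial.aeval z (s.map (algebraMap R k)) = s.eval₂ i z := by
    intro s
    rw [Polynomial.aeval_def, Polynomial.eval₂_map, ← hj]; rfl
  have hFi : Irreducible (F.map (algebraMap R k)) :=
    hprim.irreducible_iff_irreducible_map_fraction_map.1 hirr
  have hFz : Polynomial.aeval z (F.map (algebraMap R k)) = 0 := by
    rw [hev, hF]; simp [hz]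
  have hdvd : F.map (algebraMap R k) ∣ p.map (algebraMap R k) := by
    refine dvd_trans ?_ (minpoly.dvd k z (by rw [hev, hp]))
    rw [← minpoly.eq_of_irreducible hFi hFz]
    exact dvd_mul_right _ _
  obtain ⟨g, hg⟩ := hdvd
  obtain ⟨d, hd, hd'⟩ := IsLocalization.integerNormalization_spec (nonZeroDivisors R) g
  set g' := IsLocalization.integerNormalization (nonZeroDivisors R) g
  have hd0 : d ≠ 0 := nonZeroDivisors.ne_zero hd
  have key : Polynomial.C d * p = F * g' := by
    apply Polynomial.map_injective (algebraMap R k) (IsFractionRing.injective R k)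
    rw [Polynomial.map_mul, Polynomial.map_mul, hd', hg, Polynomial.map_C,
      Algebra.smul_def]
    have : algebraMap R (Polynomial k) d = Polynomial.C (algebraMap R k d) := rfl
    rw [this]; ring
  have hFp : Prime F := irreducible_iff_prime.1 hirr
  rcases hFp.dvd_or_dvd (Dvd.intro _ key.symm) with h | h
  · exfalso
    have := Polynomial.natDegree_le_of_dvd h (by simpa using hd0)
    rw [hdeg] at this
    simp at this
  · exact h

lemma omega_cube : ω ^ 3 = 1 := by
  have := Complex.isPrimitiveRoot_exp 3 (by norm_num)
  exact this.pow_eq_one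

lemma omega_ne_one : ω ≠ 1 := by
  have := Complex.isPrimitiveRoot_exp 3 (by norm_num)
  exact this.ne_one (by norm_num)

lemma omega_sum : 1 + ω + ω ^ 2 = 0 := by
  have h : (ω - 1) * (1 + ω + ω ^ 2) = 0 := by linear_combination omega_cube
  exact (mul_eq_zero.1 h).resolve_left (sub_ne_zero.2 omega_ne_one)

/-- Elements of the form `l₀ + l₁ x + l₂ x²`. -/
def InV {K : Type*} [Field K] (L : Subfield K) (x z : K) : Prop :=
  ∃ l₀ ∈ L, ∃ l₁ ∈ L, ∃ l₂ ∈ L, z = l₀ + l₁ * x + l₂ * x ^ 2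

lemma InV.add {K : Type*} [Field K] {L : Subfield K} {x z z' : K} (h : InV L x z)
    (h' : InV L x z') : InV L x (z + z') := by
  obtain ⟨a, ha, b, hb, c, hc, rfl⟩ := h
  obtain ⟨a', ha', b', hb', c', hc', rfl⟩ := h'
  exact ⟨a + a', add_mem ha ha', b + b', add_mem hb hb', c + c', add_mem hc hc', by ring⟩

lemma InV.mul {K : Type*} [Field K] {L : Subfield K} {x z z' : K} (hx : x ^ 3 ∈ L)
    (h : InV L x z) (h' : InV L x z') : InV L x (z * z') := by
  obtain ⟨a, ha, b, hb, c, hc, rfl⟩ := h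
  obtain ⟨a', ha', b', hb', c', hc', rfl⟩ := h'
  refine ⟨a * a' + (b * c' + c * b') * x ^ 3, ?_, a * b' + b * a' + c * c' * x ^ 3, ?_,
    a * c' + b * b' + c * a', ?_, by ring⟩
  · exact add_mem (mul_mem ha ha') (mul_mem (add_mem (mul_mem hb hc') (mul_mem hc hb')) hx)
  · exact add_mem (add_mem (mul_mem ha hb') (mul_mem hb ha')) (mul_mem (mul_mem hc hc') hx)
  · exact add_mem (add_mem (mul_mem ha hc') (mul_mem hb hb')) (mul_mem hc ha')

lemma InV.of_mem {K : Type*} [Field K] {L : Subfield K} {x z : K} (h : z ∈ L) : InV L x z :=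
  ⟨z, h, 0, zero_mem _, 0, zero_mem _, by ring⟩

lemma InV.sig {K : Type*} [Field K] [Algebra ℂ K] {L : Subfield K} {x z : K}
    (σ : K ≃ₐ[ℂ] K) (hC : ∀ r : ℂ, algebraMap ℂ K r ∈ L) (hL : ∀ l ∈ L, σ l = l)
    (hx : σ x = ω • x) (h : InV L x z) : InV L x (σ z) := by
  obtain ⟨a, ha, b, hb, c, hc, rfl⟩ := h
  refine ⟨a, ha, b * algebraMap ℂ K ω, mul_mem hb (hC _), c * algebraMap ℂ K ω ^ 2,
    mul_mem hc (pow_mem (hC _) _), ?_⟩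
  simp only [map_add, map_mul, map_pow, hx, hL _ ha, hL _ hb, hL _ hc, Algebra.smul_def]
  ring

lemma InV.fixed {K : Type*} [Field K] [Algebra ℂ K] {L : Subfield K} {x z : K}
    (σ : K ≃ₐ[ℂ] K) (hL : ∀ l ∈ L, σ l = l)
    (hx : σ x = ω • x) (h : InV L x z) (hz : σ z = z) : z ∈ L := by
  obtain ⟨a, ha, b, hb, c, hc, rfl⟩ := h
  set o := algebraMap ℂ K ω with ho
  have hsum : 1 + o + o ^ 2 = 0 := by
    rw [ho, ← map_one (algebraMap ℂ K), ← map_pow, ← map_add, ← map_add, omega_sum, map_zero]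
  have ho3 : o ^ 3 = 1 := by rw [ho, ← map_pow, omega_cube, map_one]
  have h1 : a + b * (o * x) + c * (o * x) ^ 2 = a + b * x + c * x ^ 2 := by
    simpa [map_add, map_mul, map_pow, hx, hL _ ha, hL _ hb, hL _ hc, Algebra.smul_def] using hz
  have h2 : a + b * (o ^ 2 * x) + c * (o ^ 2 * x) ^ 2 = a + b * x + c * x ^ 2 := by
    have := congrArg σ h1
    have hoo : σ o = o := σ.commutes ω
    simp only [map_add, map_mul, map_pow, hx, hL _ ha, hL _ hb, hL _ hc, hoo,
      Algebra.smul_def] at this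
    rw [← ho] at this
    linear_combination this + h1
  have h3 : (3 : K) ≠ 0 := by
    have : algebraMap ℂ K 3 ≠ 0 := by
      rw [Ne, map_eq_zero]; norm_num
    rwa [map_ofNat] at this
  have : (3 : K) * (a + b * x + c * x ^ 2) = 3 * a := by
    linear_combination (-1 : K) * h1 - h2 + (b * x + c * x ^ 2) * hsum + c * x ^ 2 * o * ho3
  rw [mul_left_cancel₀ h3 this]
  exact ha

/-- Fixed field computation. -/
lemma fixed_mem {K : Type*} [Field K] [Algebra ℂ K] (L : Subfield K) (x : K)
    (σ : K ≃ₐ[ℂ] K) (hσ : ∀ z, σ (σ (σ z)) = z) (hC : ∀ r : ℂ, algebraMap ℂ K r ∈ L)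
    (hL : ∀ l ∈ L, σ l = l) (hx : σ x = ω • x) (hx3 : x ^ 3 ∈ L)
    (hgen : ∀ z : K, ∃ p q, InV L x p ∧ InV L x q ∧ q ≠ 0 ∧ z = p / q)
    (z : K) (hz : σ z = z) : z ∈ L := by
  obtain ⟨p, q, hp, hq, hq0, rfl⟩ := hgen z
  have hq1 := hq.sig σ hC hL hx
  have hq2 := hq1.sig σ hC hL hx
  have e1 : σ q ≠ 0 := by simpa using hq0
  have e2 : σ (σ q) ≠ 0 := by simpa using hq0
  have hn : q * σ q * σ (σ q) ∈ L := by
    refine ((hq.mul hx3 hq1).mul hx3 hq2).fixed σ hL hx ?_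
    rw [map_mul, map_mul, hσ]; ring
  have hm : p * σ q * σ (σ q) ∈ L := by
    refine ((hp.mul hx3 hq1).mul hx3 hq2).fixed σ hL hx ?_
    have : p * σ q * σ (σ q) = (p / q) * (q * σ q * σ (σ q)) := by field_simp
    rw [this, map_mul, hz, hL _ hn]
  have : p / q = (p * σ q * σ (σ q)) / (q * σ q * σ (σ q)) := by field_simp
  rw [this]
  exact div_mem hm hn

lemma exists_root_field (R : Type) [CommRing R] [IsDomain R] [Algebra ℂ R] :
    ∃ (Ω : Type) (_ : Field Ω) (_ : Algebra ℂ Ω) (i : R →ₐ[ℂ] Ω), Function.Injective i ∧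
      ∀ D N : R, D ≠ 0 → ∃ z : Ω, i D * z ^ 3 = i N := by
  let k := FractionRing R
  let i : R →ₐ[ℂ] AlgebraicClosure k :=
    (IsScalarTower.toAlgHom ℂ k (AlgebraicClosure k)).comp (IsScalarTower.toAlgHom ℂ R k)
  have hi : Function.Injective i :=
    (algebraMap k (AlgebraicClosure k)).injective.comp (IsFractionRing.injective R k)
  refine ⟨AlgebraicClosure k, inferInstance, inferInstance, i, hi, ?_⟩
  intro D N hD
  have hD' : i D ≠ 0 := by rwa [Ne, map_eq_zero_iff i hi]
  obtain ⟨z, hz⟩ := IsAlgClosed.exists_pow_nat_eq (i N / i D) (n := 3) (by norm_num)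
  exact ⟨z, by rw [hz]; field_simp⟩

/-- `u₁ v₁ (v₁ - u₁)` as a polynomial in `u, v`. -/
def D2 (a b c : ℂ) : MvPolynomial (Fin 2) ℂ :=
  (1 + X 0 + X 1) * (C a + C b * X 0 + C c * X 1) *
    ((C a + C b * X 0 + C c * X 1) - (1 + X 0 + X 1))

lemma X_not_dvd_D2 (a b c : ℂ) (ha0 : a ≠ 0) (ha1 : a ≠ 1) (i : Fin 2) :
    ¬ (X i : MvPolynomial (Fin 2) ℂ) ∣ D2 a b c := by
  rintro ⟨g, hg⟩
  have := congrArg (MvPolynomial.eval (0 : Fin 2 → ℂ)) hg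
  simp [D2, ha0, sub_eq_zero, ha1] at this

lemma D2_ne (a b c : ℂ) (ha0 : a ≠ 0) (ha1 : a ≠ 1) : D2 a b c ≠ 0 := by
  intro h
  exact X_not_dvd_D2 a b c ha0 ha1 0 (h ▸ dvd_zero _)

lemma relPrime_D2 (a b c : ℂ) (ha0 : a ≠ 0) (ha1 : a ≠ 1) :
    IsRelPrime (D2 a b c) (X 0 * X 1) := by
  refine IsRelPrime.symm (IsRelPrime.mul_left ?_ ?_)
  · exact (X_prime.irreducible).isRelPrime_iff_not_dvd.2 (X_not_dvd_D2 a b c ha0 ha1 0)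
  · exact (X_prime.irreducible).isRelPrime_iff_not_dvd.2 (X_not_dvd_D2 a b c ha0 ha1 1)

lemma not_sq_dvd : ¬ (X 0 : MvPolynomial (Fin 2) ℂ) ^ 2 ∣ X 0 * X 1 := by
  rintro ⟨g, hg⟩
  have h : (X 1 : MvPolynomial (Fin 2) ℂ) = X 0 * g := by
    apply mul_left_cancel₀ (X_ne_zero (R := ℂ) (0 : Fin 2))
    rw [hg]; ring
  have := congrArg (MvPolynomial.eval (![0, 1] : Fin 2 → ℂ)) h
  simp at this

lemma not_X_sq_dvd {R : Type*} [CommRing R] [IsDomain R] (r : R) (hr : r ≠ 0) :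
    ¬ (Polynomial.X : Polynomial R) ^ 2 ∣
      Polynomial.C r * Polynomial.X * (Polynomial.X + 1) := by
  rintro ⟨g, hg⟩
  have h : Polynomial.C r * (Polynomial.X + 1) = Polynomial.X * g := by
    apply mul_left_cancel₀ (Polynomial.X_ne_zero (R := R))
    linear_combination hg
  have := congrArg (Polynomial.eval 0) h
  simp [hr] at this

lemma relPrime_poly (R : Type*) [CommRing R] [IsDomain R] [UniqueFactorizationMonoid R]
    (d n : R) (hd : d ≠ 0) (h : IsRelPrime d n) :
    IsRelPrime (Polynomial.C d) (Polynomial.C n * Polynomial.X * (Polynomial.X + 1)) := by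
  refine IsRelPrime.symm (IsRelPrime.mul_left (IsRelPrime.mul_left ?_ ?_) ?_)
  · intro g hn hg
    obtain ⟨g', rfl⟩ : ∃ g', g = Polynomial.C g' := by
      have := Polynomial.natDegree_le_of_dvd hg (by simpa using hd)
      rw [Polynomial.natDegree_C] at this
      exact ⟨_, Polynomial.eq_C_of_natDegree_le_zero this⟩
    rw [Polynomial.C_dvd_iff_dvd_coeff] at hn hg
    have h1 := hn 0
    have h2 := hg 0
    simp only [Polynomial.coeff_C_zero] at h1 h2
    exact (h h2 h1).map Polynomial.C
  · refine Polynomial.prime_X.irreducible.isRelPrime_iff_not_dvd.2 ?_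
    rintro ⟨g, hg⟩
    have := congrArg (Polynomial.eval 0) hg
    simp [hd] at this
  · have hp : Prime (Polynomial.X + 1 : Polynomial R) := by
      have := Polynomial.prime_X_sub_C (-1 : R)
      simpa using this
    refine hp.irreducible.isRelPrime_iff_not_dvd.2 ?_
    rintro ⟨g, hg⟩
    have := congrArg (Polynomial.eval (-1)) hg
    simp [hd] at this

/-- A polynomial all of whose double coefficients lie in the kernel of `f`. -/
lemma dvd_of_map_map {S E : Type*} [CommRing S] [CommRing E] (f : S →+* E) (d : S)
    (hd : ∀ s, f s = 0 → d ∣ s) (r : Polynomial (Polynomial S))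
    (hr : r.map (Polynomial.mapRingHom f) = 0) :
    Polynomial.C (Polynomial.C d) ∣ r := by
  rw [Polynomial.C_dvd_iff_dvd_coeff]
  intro i
  rw [Polynomial.C_dvd_iff_dvd_coeff]
  intro j
  apply hd
  have := congrArg (fun q => (q.coeff i).coeff j) hr
  simpa using this

lemma division_step {S E : Type*} [CommRing S] [CommRing E] (f : S →+* E) (d : S)
    (hd : ∀ s, f s = 0 → d ∣ s) (P : Polynomial (Polynomial S))
    (h : (Polynomial.C 1 * Polynomial.X ^ 3 -
      Polynomial.C (Polynomial.C 1 * Polynomial.X * (Polynomial.X + 1)) :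
        Polynomial (Polynomial E)) ∣ P.map (Polynomial.mapRingHom f)) :
    ∃ Q Q', P = Polynomial.C (Polynomial.C d) * Q +
      (Polynomial.X ^ 3 - Polynomial.C (Polynomial.X * (Polynomial.X + 1))) * Q' := by
  set G : Polynomial (Polynomial S) :=
    Polynomial.X ^ 3 - Polynomial.C (Polynomial.X * (Polynomial.X + 1)) with hG
  have hGm : G.Monic := Polynomial.monic_X_pow_sub_C _ three_ne_zero
  have hGmap : G.map (Polynomial.mapRingHom f) = Polynomial.C 1 * Polynomial.X ^ 3 -
      Polynomial.C (Polynomial.C 1 * Polynomial.X * (Polynomial.X + 1)) := by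
    simp [hG]
  rw [← hGmap] at h
  have h3 : (P %ₘ G).map (Polynomial.mapRingHom f) = 0 := by
    rw [Polynomial.map_modByMonic _ hGm]
    exact (Polynomial.modByMonic_eq_zero_iff_dvd (hGm.map _)).2 h
  obtain ⟨Q, hQ⟩ := dvd_of_map_map f _ hd (P %ₘ G) h3
  have h4 := Polynomial.modByMonic_add_div P G
  rw [hQ] at h4
  exact ⟨Q, P /ₘ G, h4.symm⟩

lemma alg_smul {A K : Type*} [CommRing A] [CommRing K] [Algebra ℂ A] [Algebra A K] [Algebra ℂ K]
    [IsScalarTower ℂ A K] (r : ℂ) (z : A) : algebraMap A K (r • z) = r • algebraMap A K z := by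
  rw [Algebra.smul_def, Algebra.smul_def, map_mul, ← IsScalarTower.algebraMap_apply]

lemma eval_gen1 {R T : Type*} [CommRing R] [CommRing T] (e0 : R →+* T) (x0 x3 x4 : T) (d n : R) :
    Polynomial.eval₂RingHom (Polynomial.eval₂RingHom (Polynomial.eval₂RingHom e0 x0) x3) x4
      (Polynomial.C (Polynomial.C (Polynomial.C d * Polynomial.X ^ 3 - Polynomial.C n))) =
      e0 d * x0 ^ 3 - e0 n := by
  simp only [Polynomial.coe_eval₂RingHom, Polynomial.eval₂_C, Polynomial.eval₂_sub,
    Polynomial.eval₂_mul, Polynomial.eval₂_X_pow]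

lemma eval_gen2 {R T : Type*} [CommRing R] [CommRing T] (e0 : R →+* T) (x0 x3 x4 : T) :
    Polynomial.eval₂RingHom (Polynomial.eval₂RingHom (Polynomial.eval₂RingHom e0 x0) x3) x4
      (Polynomial.X ^ 3 - Polynomial.C (Polynomial.X * (Polynomial.X + 1))) =
      x4 ^ 3 - x3 * (x3 + 1) := by
  simp

lemma surj_of {n : ℕ} {S : Type*} [Semiring S] (e : S →+* MvPolynomial (Fin n) ℂ)
    (hC : ∀ r : ℂ, ∃ s, e s = C r) (hX : ∀ k, ∃ s, e s = X k) : Function.Surjective e := by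
  intro p
  induction p using MvPolynomial.induction_on with
  | C r => exact hC r
  | add p q hp hq =>
    obtain ⟨p', rfl⟩ := hp
    obtain ⟨q', rfl⟩ := hq
    exact ⟨p' + q', map_add _ _ _⟩
  | mul_X p k hp =>
    obtain ⟨p', rfl⟩ := hp
    obtain ⟨q', hq'⟩ := hX k
    exact ⟨p' * q', by rw [map_mul, hq']⟩

lemma exists_model (a b c : ℂ) (ha0 : a ≠ 0) (ha1 : a ≠ 1) :
    ∃ (Ω : Type) (_ : Field Ω) (_ : Algebra ℂ Ω) (w u v t x : Ω),
      (∀ p : MvPolynomial (Fin 5) ℂ, aeval ![w, u, v, t, x] p = 0 ↔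
        p ∈ Ideal.span {pS5 a b c, pF₁5}) ∧
      (∀ p : MvPolynomial (Fin 4) ℂ, aeval ![t, u, v, w * x] p = 0 →
        p ∈ Ideal.span {pY a b c}) ∧ x ≠ 0 := by
  have hD := D2_ne a b c ha0 ha1
  obtain ⟨E, _, _, i, hi, hroot⟩ := exists_root_field (MvPolynomial (Fin 2) ℂ)
  obtain ⟨w, hw⟩ := hroot (D2 a b c) (X 0 * X 1) hD
  have hkw := cubic_dvd (i : MvPolynomial (Fin 2) ℂ →+* E) hi w (D2 a b c) (X 0 * X 1) (X 0)
    X_prime (X_not_dvd_D2 a b c ha0 ha1 0) (dvd_mul_right _ _) not_sq_dvd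
    (relPrime_D2 a b c ha0 ha1) hw
  obtain ⟨Ω, _, _, j, hj, hroot'⟩ := exists_root_field (Polynomial E)
  obtain ⟨x, hx⟩ := hroot' 1 (Polynomial.C 1 * Polynomial.X * (Polynomial.X + 1)) one_ne_zero
  have hkx := cubic_dvd (j : Polynomial E →+* Ω) hj x 1
    (Polynomial.C 1 * Polynomial.X * (Polynomial.X + 1)) Polynomial.X
    Polynomial.prime_X Polynomial.prime_X.irreducible.not_dvd_one
    (by rw [mul_assoc, mul_left_comm]; exact dvd_mul_right _ _)
    (not_X_sq_dvd 1 one_ne_zero) isRelPrime_one_left hx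
  -- the elements
  let u' : Ω := j (Polynomial.C (i (X 0)))
  let v' : Ω := j (Polynomial.C (i (X 1)))
  let w' : Ω := j (Polynomial.C w)
  let t' : Ω := j Polynomial.X
  have hjC : ∀ r : ℂ, j (Polynomial.C (algebraMap ℂ E r)) = algebraMap ℂ Ω r := fun r =>
    j.commutes r
  have hiC : ∀ r : ℂ, i (C r) = algebraMap ℂ E r := fun r => i.commutes r
  have hw' : (1 + u' + v') * (algebraMap ℂ Ω a + algebraMap ℂ Ω b * u' + algebraMap ℂ Ω c * v') *
      ((algebraMap ℂ Ω a + algebraMap ℂ Ω b * u' + algebraMap ℂ Ω c * v') - (1 + u' + v'))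
      * w' ^ 3 = u' * v' := by
    have := congrArg (fun e => j (Polynomial.C e)) hw
    simpa only [D2, map_mul, map_add, map_sub, map_one, map_pow, hiC, hjC] using this
  have hx' : x ^ 3 = t' * (t' + 1) := by
    simpa [t'] using hx
  refine ⟨Ω, inferInstance, inferInstance, w', u', v', t', x, ?_, ?_, ?_⟩
  · intro p
    constructor
    · intro hp
      let e0 : MvPolynomial (Fin 2) ℂ →+* MvPolynomial (Fin 5) ℂ :=
        (aeval ![X 1, X 2] : MvPolynomial (Fin 2) ℂ →ₐ[ℂ] MvPolynomial (Fin 5) ℂ)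
      let e1 := Polynomial.eval₂RingHom e0 (X 0)
      let e2 := Polynomial.eval₂RingHom e1 (X 3)
      let e3 := Polynomial.eval₂RingHom e2 (X 4)
      have hsurj : Function.Surjective e3 := by
        refine surj_of e3 ?_ ?_
        · exact fun r => ⟨Polynomial.C (Polynomial.C (Polynomial.C (C r))), by
            simp [e0, e1, e2, e3, algebraMap_eq]⟩
        · intro k
          fin_cases k
          · exact ⟨Polynomial.C (Polynomial.C Polynomial.X), by simp [e1, e2, e3]⟩
          · exact ⟨Polynomial.C (Polynomial.C (Polynomial.C (X 0))), by simp [e0, e1, e2, e3]⟩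
          · exact ⟨Polynomial.C (Polynomial.C (Polynomial.C (X 1))), by simp [e0, e1, e2, e3]⟩
          · exact ⟨Polynomial.C Polynomial.X, by simp [e2, e3]⟩
          · exact ⟨Polynomial.X, by simp [e3]⟩
      obtain ⟨P, rfl⟩ := hsurj p
      let ev0 : Polynomial (MvPolynomial (Fin 2) ℂ) →+* E :=
        Polynomial.eval₂RingHom (i : MvPolynomial (Fin 2) ℂ →+* E) w
      let ev1 := Polynomial.mapRingHom ev0
      have hcomp : ((aeval ![w', u', v', t', x] : MvPolynomial (Fin 5) ℂ →ₐ[ℂ] Ω) :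
          MvPolynomial (Fin 5) ℂ →+* Ω).comp e3 =
          (Polynomial.eval₂RingHom (j : Polynomial E →+* Ω) x).comp
            (Polynomial.mapRingHom ev1) := by
        apply Polynomial.ringHom_ext'
        · apply Polynomial.ringHom_ext'
          · apply Polynomial.ringHom_ext'
            · apply MvPolynomial.ringHom_ext'
              · ext r; simp [e0, e1, e2, e3, ev0, ev1, hiC, hjC]
              · intro k; fin_cases k <;> simp [e0, e1, e2, e3, ev0, ev1, u', v']
            · simp [e0, e1, e2, e3, ev0, ev1, w']
          · simp [e0, e1, e2, e3, ev0, ev1, t']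
        · simp [e0, e1, e2, e3, ev0, ev1]
      have h1 := RingHom.congr_fun hcomp P
      have h2 := hkx (P.map ev1) (h1.symm.trans hp)
      obtain ⟨Q, Q', h4⟩ := division_step ev0 _ hkw P h2
      rw [h4, e3.map_add, e3.map_mul]
      rw [show e3 ((Polynomial.X ^ 3 - Polynomial.C (Polynomial.X * (Polynomial.X + 1))) * Q') =
        e3 (Polynomial.X ^ 3 - Polynomial.C (Polynomial.X * (Polynomial.X + 1))) * e3 Q' from
        e3.map_mul _ _]
      refine add_mem (Ideal.mul_mem_right _ _ (Ideal.subset_span ?_))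
        (Ideal.mul_mem_right _ _ (Ideal.subset_span ?_))
      · left
        refine (eval_gen1 e0 (X 0) (X 3) (X 4) (D2 a b c) (X 0 * X 1)).trans ?_
        simp [e0, pS5, u₁5, v₁5, D2, algebraMap_eq]
        ring
      · right
        exact eval_gen2 e0 (X 0) (X 3) (X 4)
    · intro hp
      have : Ideal.span {pS5 a b c, pF₁5} ≤ RingHom.ker
          (aeval ![w', u', v', t', x] : MvPolynomial (Fin 5) ℂ →ₐ[ℂ] Ω) := by
        rw [Ideal.span_le]
        rintro _ (rfl | rfl)
        · simp [RingHom.mem_ker, pS5, u₁5, v₁5]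
          linear_combination hw'
        · simp [RingHom.mem_ker, pF₁5]
          linear_combination hx'
      exact this hp
  · intro p hp
    let e0 : MvPolynomial (Fin 2) ℂ →+* MvPolynomial (Fin 4) ℂ :=
      (aeval ![X 1, X 2] : MvPolynomial (Fin 2) ℂ →ₐ[ℂ] MvPolynomial (Fin 4) ℂ)
    let e1 := Polynomial.eval₂RingHom e0 (X 0)
    let e2 := Polynomial.eval₂RingHom e1 (X 3)
    have hsurj : Function.Surjective e2 := by
      refine surj_of e2 ?_ ?_
      · exact fun r => ⟨Polynomial.C (Polynomial.C (C r)), by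
          simp [e0, e1, e2, algebraMap_eq]⟩
      · intro k
        fin_cases k
        · exact ⟨Polynomial.C Polynomial.X, by simp [e1, e2]⟩
        · exact ⟨Polynomial.C (Polynomial.C (X 0)), by simp [e0, e1, e2]⟩
        · exact ⟨Polynomial.C (Polynomial.C (X 1)), by simp [e0, e1, e2]⟩
        · exact ⟨Polynomial.X, by simp [e2]⟩
    obtain ⟨P, rfl⟩ := hsurj p
    let f : Polynomial (MvPolynomial (Fin 2) ℂ) →+* Ω :=
      (j : Polynomial E →+* Ω).comp (Polynomial.mapRingHom (i : MvPolynomial (Fin 2) ℂ →+* E))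
    have hf : Function.Injective f := hj.comp (Polynomial.map_injective _ hi)
    have hcomp : ((aeval ![t', u', v', w' * x] : MvPolynomial (Fin 4) ℂ →ₐ[ℂ] Ω) :
        MvPolynomial (Fin 4) ℂ →+* Ω).comp e2 = Polynomial.eval₂RingHom f (w' * x) := by
      refine Polynomial.ringHom_ext' (Polynomial.ringHom_ext'
        (MvPolynomial.ringHom_ext' ?_ ?_) ?_) ?_
      · ext r; simp [e0, e1, e2, f, hiC, hjC]
      · intro k; fin_cases k <;> simp [e0, e1, e2, f, u', v']
      · simp [e0, e1, e2, f, t']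
      · simp [e0, e1, e2, f]
    have h1 := RingHom.congr_fun hcomp P
    have hXX : (X 0 * X 1 : MvPolynomial (Fin 2) ℂ) ≠ 0 :=
      mul_ne_zero (X_ne_zero _) (X_ne_zero _)
    have hroot3 : f (Polynomial.C (D2 a b c)) * (w' * x) ^ 3 =
        f (Polynomial.C (X 0 * X 1) * Polynomial.X * (Polynomial.X + 1)) := by
      have hfC : ∀ r, f (Polynomial.C r) = j (Polynomial.C (i r)) := by intro r; simp [f]
      have hfX : f Polynomial.X = t' := by simp [f, t']
      simp only [map_mul, map_add, map_one, hfC, hfX]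
      simp only [D2, map_mul, map_add, map_sub, map_one, hiC, hjC]
      linear_combination x ^ 3 * hw' + u' * v' * hx'
    have h2 := cubic_dvd f hf (w' * x) (Polynomial.C (D2 a b c))
      (Polynomial.C (X 0 * X 1) * Polynomial.X * (Polynomial.X + 1)) Polynomial.X
      Polynomial.prime_X
      (by
        rintro ⟨g, hg⟩
        have := congrArg (Polynomial.eval 0) hg
        simp [hD] at this)
      (by rw [mul_assoc, mul_left_comm]; exact dvd_mul_right _ _)
      (not_X_sq_dvd _ hXX) (relPrime_poly _ _ _ hD (relPrime_D2 a b c ha0 ha1)) hroot3 P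
      (h1.symm.trans hp)
    obtain ⟨Q, hQ⟩ := h2
    rw [hQ, map_mul]
    refine Ideal.mul_mem_right _ _ (Ideal.subset_span ?_)
    rw [Set.mem_singleton_iff]
    simp [e0, e1, e2, pY, u₁Y, v₁Y, D2, algebraMap_eq]
    ring
  · rintro rfl
    have h0 : j (Polynomial.X * (Polynomial.X + 1)) = j 0 := by
      rw [map_mul, map_add, map_one, map_zero]
      linear_combination -hx'
    have h1 := congrArg (fun q => Polynomial.coeff q 1) (hj h0)
    simp [mul_add] at h1

lemma exists_sigma (a b c : ℂ) : ∃ s : HSurf2 (pS5 a b c) pF₁5 →ₐ[ℂ] HSurf2 (pS5 a b c) pF₁5,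
    s (Ideal.Quotient.mk _ (X 0)) = (ω ^ 2) • Ideal.Quotient.mk _ (X 0) ∧
    s (Ideal.Quotient.mk _ (X 1)) = Ideal.Quotient.mk _ (X 1) ∧
    s (Ideal.Quotient.mk _ (X 2)) = Ideal.Quotient.mk _ (X 2) ∧
    s (Ideal.Quotient.mk _ (X 3)) = Ideal.Quotient.mk _ (X 3) ∧
    s (Ideal.Quotient.mk _ (X 4)) = ω • Ideal.Quotient.mk _ (X 4) := by
  set I := Ideal.span {pS5 a b c, pF₁5} with hI
  let f : MvPolynomial (Fin 5) ℂ →ₐ[ℂ] MvPolynomial (Fin 5) ℂ :=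
    aeval ![C (ω ^ 2) * X 0, X 1, X 2, X 3, C ω * X 4]
  have ho : (C ω : MvPolynomial (Fin 5) ℂ) ^ 3 = 1 := by rw [← map_pow, omega_cube, map_one]
  have hf : I ≤ I.comap f := by
    rw [hI, Ideal.span_le]
    rintro _ (rfl | rfl)
    · have : f (pS5 a b c) = pS5 a b c := by
        simp only [f, pS5, u₁5, v₁5, map_sub, map_mul, map_add, map_pow, map_one, aeval_X,
          aeval_C, algebraMap_eq, Matrix.cons_val]
        linear_combination (X 0 ^ 3 * (1 + X 1 + X 2) * (C a + C b * X 1 + C c * X 2) *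
          ((C a + C b * X 1 + C c * X 2) - (1 + X 1 + X 2))) * (C ω ^ 3 + 1) * ho
      simp only [SetLike.mem_coe, Ideal.mem_comap, this]
      exact Ideal.subset_span (Or.inl rfl)
    · have : f pF₁5 = pF₁5 := by
        simp [f, pF₁5]
        linear_combination X 4 ^ 3 * ho
      simp only [SetLike.mem_coe, Ideal.mem_comap, this]
      exact Ideal.subset_span (Or.inr rfl)
  let s : (MvPolynomial (Fin 5) ℂ ⧸ I) →ₐ[ℂ] (MvPolynomial (Fin 5) ℂ ⧸ I) :=
    Ideal.quotientMapₐ I f hf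
  have hs : ∀ p, s (Ideal.Quotient.mk I p) = Ideal.Quotient.mk I (f p) := fun p => rfl
  have hsm : ∀ (r : ℂ) p, Ideal.Quotient.mk I (C r * p) = r • Ideal.Quotient.mk I p := by
    intro r p
    rw [← MvPolynomial.smul_eq_C_mul]; rfl
  refine ⟨s, ?_, ?_, ?_, ?_, ?_⟩ <;> rw [hs] <;> simp only [f, aeval_X]
  · exact hsm _ _
  · rfl
  · rfl
  · rfl
  · exact hsm _ _

lemma sigma_cube {n : ℕ} {I : Ideal (MvPolynomial (Fin n) ℂ)}
    (s : (MvPolynomial (Fin n) ℂ ⧸ I) →ₐ[ℂ] (MvPolynomial (Fin n) ℂ ⧸ I))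
    (h : ∀ k, ∃ r : ℂ, r ^ 3 = 1 ∧ s (Ideal.Quotient.mk _ (X k)) = r • Ideal.Quotient.mk _ (X k)) :
    s.comp (s.comp s) = AlgHom.id ℂ _ := by
  apply Ideal.Quotient.algHom_ext
  apply MvPolynomial.algHom_ext
  intro k
  obtain ⟨r, hr, hk⟩ := h k
  simp [hk, smul_smul]
  rw [← pow_two, ← pow_succ, hr, one_smul]

lemma exists_phi (a b c : ℂ) : ∃ φ : HSurf (pY a b c) →ₐ[ℂ] HSurf2 (pS5 a b c) pF₁5,
    ∀ p, φ (Ideal.Quotient.mk _ p) =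
      Ideal.Quotient.mk _ (aeval ![X 3, X 1, X 2, X 0 * X 4] p : MvPolynomial (Fin 5) ℂ) := by
  set I := Ideal.span {pS5 a b c, pF₁5} with hI
  let f : MvPolynomial (Fin 4) ℂ →ₐ[ℂ] MvPolynomial (Fin 5) ℂ :=
    aeval ![X 3, X 1, X 2, X 0 * X 4]
  have hf : Ideal.span {pY a b c} ≤ I.comap f := by
    rw [Ideal.span_singleton_le_iff_mem, Ideal.mem_comap]
    have : f (pY a b c) = pS5 a b c * X 4 ^ 3 + pF₁5 * (X 1 * X 2) := by
      simp [f, pY, pS5, pF₁5, u₁Y, v₁Y, u₁5, v₁5, algebraMap_eq]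
      ring
    rw [this]
    exact add_mem (Ideal.mul_mem_right _ _ (Ideal.subset_span (Or.inl rfl)))
      (Ideal.mul_mem_right _ _ (Ideal.subset_span (Or.inr rfl)))
  exact ⟨Ideal.quotientMapₐ I f hf, fun p => rfl⟩

lemma domain_and_inj (a b c : ℂ) (ha0 : a ≠ 0) (ha1 : a ≠ 1) :
    IsDomain (HSurf2 (pS5 a b c) pF₁5) ∧
    (∀ φ : HSurf (pY a b c) →ₐ[ℂ] HSurf2 (pS5 a b c) pF₁5,
    (∀ p, φ (Ideal.Quotient.mk _ p) =
      Ideal.Quotient.mk _ (aeval ![X 3, X 1, X 2, X 0 * X 4] p : MvPolynomial (Fin 5) ℂ)) →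
      Function.Injective φ) ∧
    (Ideal.Quotient.mk _ (X 4) : HSurf2 (pS5 a b c) pF₁5) ≠ 0 := by
  obtain ⟨Ω, _, _, w, u, v, t, x, h5, h4, hx⟩ := exists_model a b c ha0 ha1
  refine ⟨?_, ?_, ?_⟩
  · have : Ideal.span {pS5 a b c, pF₁5} = RingHom.ker
        (aeval ![w, u, v, t, x] : MvPolynomial (Fin 5) ℂ →ₐ[ℂ] Ω) := by
      ext p
      rw [RingHom.mem_ker, h5]
    have hp : (Ideal.span {pS5 a b c, pF₁5}).IsPrime := by
      rw [this]; exact RingHom.ker_isPrime _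
    exact Ideal.Quotient.isDomain _
  · intro φ hφ
    rw [injective_iff_map_eq_zero]
    intro q hq
    obtain ⟨p, rfl⟩ := Ideal.Quotient.mk_surjective q
    rw [hφ, Ideal.Quotient.eq_zero_iff_mem, ← h5] at hq
    rw [Ideal.Quotient.eq_zero_iff_mem]
    apply h4
    rw [← hq]
    have : (aeval ![t, u, v, w * x] : MvPolynomial (Fin 4) ℂ →ₐ[ℂ] Ω) =
        (aeval ![w, u, v, t, x] : MvPolynomial (Fin 5) ℂ →ₐ[ℂ] Ω).comp
          (aeval ![X 3, X 1, X 2, X 0 * X 4]) := by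
      apply MvPolynomial.algHom_ext
      intro k
      fin_cases k <;> simp
    rw [this]; rfl
  · rw [Ne, Ideal.Quotient.eq_zero_iff_mem, ← h5]
    simpa using hx

/-- Abstract version: an injective map of domains whose image generates the fixed field. -/
lemma final_abs {A B K L : Type} [CommRing A] [IsDomain A] [Algebra ℂ A] [CommRing B]
    [Algebra ℂ B] [Field K] [Algebra ℂ K] [Algebra A K] [IsScalarTower ℂ A K]
    [IsFractionRing A K] [Field L] [Algebra ℂ L] [Algebra B L] [IsScalarTower ℂ B L]
    [IsFractionRing B L] (s : A →ₐ[ℂ] A) (hs3 : s.comp (s.comp s) = AlgHom.id ℂ _)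
    (φ : B →ₐ[ℂ] A) (hφ : Function.Injective φ) (hsφ : s.comp φ = φ) (x : A) (hx0 : x ≠ 0)
    (hx : s x = ω • x) (y : B) (hy : φ y = x ^ 3)
    (hgen : ∀ r : A, ∃ n : ℕ, ∃ b₀ b₁ b₂ : B, x ^ (3 * n) * r =
      φ b₀ + φ b₁ * x + φ b₂ * x ^ 2) :
    ∃ σ : K ≃ₐ[ℂ] K, orderOf σ = 3 ∧ (∀ r, σ (algebraMap A K r) = algebraMap A K (s r)) ∧
      ∃ ψ : L ≃ₐ[ℂ] (AlgHom.equalizer σ.toAlgHom (AlgHom.id ℂ K)),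
        ∀ r, (↑(ψ (algebraMap B L r)) : K) = algebraMap A K (φ r) := by
  have hs3' : ∀ r, s (s (s r)) = r := fun r => AlgHom.congr_fun hs3 r
  let e : A ≃ₐ[ℂ] A := AlgEquiv.ofAlgHom s (s.comp s) hs3 hs3
  let σ : K ≃ₐ[ℂ] K := IsFractionRing.algEquivOfAlgEquiv e
  have hσ : ∀ r, σ (algebraMap A K r) = algebraMap A K (s r) := fun r =>
    IsFractionRing.algEquivOfAlgEquiv_algebraMap e r
  have hσ3 : ∀ z, σ (σ (σ z)) = z := by
    intro z
    obtain ⟨p, q, hq, rfl⟩ := IsFractionRing.div_surjective (A := A) z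
    simp only [map_div₀, hσ, hs3']
  have hinjA := IsFractionRing.injective A K
  have hxK : σ (algebraMap A K x) = ω • algebraMap A K x := by
    rw [hσ, hx, Algebra.smul_def, Algebra.smul_def, map_mul,
      ← IsScalarTower.algebraMap_apply]
  have hxK0 : algebraMap A K x ≠ 0 := by
    rwa [Ne, map_eq_zero_iff _ hinjA]
  have hord : orderOf σ = 3 := by
    have : Fact (Nat.Prime 3) := ⟨Nat.prime_three⟩
    apply orderOf_eq_prime
    · ext z
      exact hσ3 z
    · intro h
      rw [h, Algebra.smul_def] at hxK
      have h1 : algebraMap ℂ K ω = algebraMap ℂ K 1 := by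
        apply mul_right_cancel₀ hxK0
        rw [← hxK, map_one, one_mul]; rfl
      exact omega_ne_one ((algebraMap ℂ K).injective h1)
  refine ⟨σ, hord, hσ, ?_⟩
  let g : B →ₐ[ℂ] K := (IsScalarTower.toAlgHom ℂ A K).comp φ
  have hg : Function.Injective g := hinjA.comp hφ
  let Ψ : L →ₐ[ℂ] K := IsFractionRing.liftAlgHom hg
  have hΨ : ∀ r, Ψ (algebraMap B L r) = algebraMap A K (φ r) := fun r =>
    IsFractionRing.lift_algebraMap hg r
  have hfix : ∀ l, σ (Ψ l) = Ψ l := by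
    intro l
    have : IsDomain B := hφ.isDomain φ.toRingHom
    obtain ⟨p, q, hq, rfl⟩ := IsFractionRing.div_surjective (A := B) l
    have := fun r => AlgHom.congr_fun hsφ r
    simp only [AlgHom.comp_apply] at this
    simp only [map_div₀, hΨ, hσ, this]
  let Lf : Subfield K := Ψ.toRingHom.fieldRange
  have hLf : ∀ l, Ψ l ∈ Lf := fun l => ⟨l, rfl⟩
  have hφL : ∀ r, algebraMap A K (φ r) ∈ Lf := fun r => hΨ r ▸ hLf _
  have hx3 : algebraMap A K x ^ 3 ∈ Lf := by
    rw [← map_pow, ← hy]; exact hφL _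
  have hInV : ∀ r : A, InV Lf (algebraMap A K x) (algebraMap A K r) := by
    intro r
    obtain ⟨n, b₀, b₁, b₂, h⟩ := hgen r
    have h' := congrArg (algebraMap A K) h
    simp only [map_mul, map_add, map_pow] at h'
    have hr : algebraMap A K r = ((algebraMap A K x ^ 3) ^ n)⁻¹ *
        (algebraMap A K (φ b₀) + algebraMap A K (φ b₁) * algebraMap A K x +
          algebraMap A K (φ b₂) * algebraMap A K x ^ 2) := by
      rw [← h', ← pow_mul]
      field_simp
    rw [hr]
    exact InV.mul hx3 (InV.of_mem (inv_mem (pow_mem hx3 _)))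
      ⟨_, hφL _, _, hφL _, _, hφL _, rfl⟩
  let Ψ' : L →ₐ[ℂ] (AlgHom.equalizer σ.toAlgHom (AlgHom.id ℂ K)) :=
    Ψ.codRestrict _ hfix
  have hbij : Function.Bijective Ψ' := by
    refine ⟨Ψ'.toRingHom.injective, ?_⟩
    rintro ⟨z, hz⟩
    have : z ∈ Lf := by
      refine fixed_mem Lf (algebraMap A K x) σ hσ3 ?_ ?_ hxK hx3 ?_ z hz
      · intro r; rw [← Ψ.commutes]; exact hLf _
      · rintro _ ⟨l, rfl⟩; exact hfix l
      · intro z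
        obtain ⟨p, q, hq, rfl⟩ := IsFractionRing.div_surjective (A := A) z
        refine ⟨_, _, hInV p, hInV q, ?_, rfl⟩
        rw [Ne, map_eq_zero_iff _ hinjA]
        exact nonZeroDivisors.ne_zero hq
    obtain ⟨l, hl⟩ := this
    exact ⟨l, Subtype.ext hl⟩
  exact ⟨AlgEquiv.ofBijective Ψ' hbij, hΨ⟩

/-- Let `a, b, c ∈ ℂ ∖ {0,1}` be pairwise distinct, let
`K = Frac(ℂ[w,u,v,t₁,x]/(w³u₁v₁(v₁−u₁) − uv, x³ − t₁(t₁+1)))` be the function field of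
`S × F₁`, and let `σ` be the `ℂ`-algebra automorphism of `K` of order 3 determined by
`σ(w) = ω²·w`, `σ(x) = ω·x`, `σ(u) = u`, `σ(v) = v`, `σ(t₁) = t₁` (the diagonal
`G = ℤ/3ℤ` action).  Then the fixed field `K^σ` is isomorphic as a `ℂ`-algebra to the
function field of `Y`, an isomorphism `ψ` being induced by `y₁ ↦ w·x` (and `t₁ ↦ t₁`,
`u ↦ u`, `v ↦ v`): i.e. `Y` is birationally equivalent to `(S × F₁)/G`. -/
theorem stmt3 (a b c : ℂ) (ha0 : a ≠ 0) (ha1 : a ≠ 1) (hb0 : b ≠ 0) (hb1 : b ≠ 1)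
    (hc0 : c ≠ 0) (hc1 : c ≠ 1) (hab : a ≠ b) (hac : a ≠ c) (hbc : b ≠ c) :
    ∃ σ : FractionRing (HSurf2 (pS5 a b c) pF₁5) ≃ₐ[ℂ] FractionRing (HSurf2 (pS5 a b c) pF₁5),
      orderOf σ = 3 ∧
      σ (cls2 (pS5 a b c) pF₁5 (X 0)) = (ω ^ 2 : ℂ) • cls2 (pS5 a b c) pF₁5 (X 0) ∧
      σ (cls2 (pS5 a b c) pF₁5 (X 4)) = (ω : ℂ) • cls2 (pS5 a b c) pF₁5 (X 4) ∧
      σ (cls2 (pS5 a b c) pF₁5 (X 1)) = cls2 (pS5 a b c) pF₁5 (X 1) ∧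
      σ (cls2 (pS5 a b c) pF₁5 (X 2)) = cls2 (pS5 a b c) pF₁5 (X 2) ∧
      σ (cls2 (pS5 a b c) pF₁5 (X 3)) = cls2 (pS5 a b c) pF₁5 (X 3) ∧
      ∃ ψ : FractionRing (HSurf (pY a b c)) ≃ₐ[ℂ]
          (AlgHom.equalizer σ.toAlgHom (AlgHom.id ℂ (FractionRing (HSurf2 (pS5 a b c) pF₁5)))),
        (↑(ψ (cls (pY a b c) (X 3))) : FractionRing (HSurf2 (pS5 a b c) pF₁5))
          = cls2 (pS5 a b c) pF₁5 (X 0 * X 4) ∧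
        (↑(ψ (cls (pY a b c) (X 0))) : FractionRing (HSurf2 (pS5 a b c) pF₁5))
          = cls2 (pS5 a b c) pF₁5 (X 3) ∧
        (↑(ψ (cls (pY a b c) (X 1))) : FractionRing (HSurf2 (pS5 a b c) pF₁5))
          = cls2 (pS5 a b c) pF₁5 (X 1) ∧
        (↑(ψ (cls (pY a b c) (X 2))) : FractionRing (HSurf2 (pS5 a b c) pF₁5))
          = cls2 (pS5 a b c) pF₁5 (X 2) := by
  obtain ⟨hdom, hinj, hx0⟩ := domain_and_inj a b c ha0 ha1
  obtain ⟨s, s0, s1, s2, s3, s4⟩ := exists_sigma a b c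
  obtain ⟨φ, hφ⟩ := exists_phi a b c
  have hφi := hinj φ hφ
  have hdomB : IsDomain (HSurf (pY a b c)) := hφi.isDomain φ.toRingHom
  have hs3 : s.comp (s.comp s) = AlgHom.id ℂ _ := by
    apply sigma_cube
    intro k
    fin_cases k
    · exact ⟨ω ^ 2, by rw [← pow_mul, mul_comm, pow_mul, omega_cube, one_pow], s0⟩
    · exact ⟨1, one_pow _, by rw [one_smul]; exact s1⟩
    · exact ⟨1, one_pow _, by rw [one_smul]; exact s2⟩
    · exact ⟨1, one_pow _, by rw [one_smul]; exact s3⟩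
    · exact ⟨ω, omega_cube, s4⟩
  have f0 : φ (Ideal.Quotient.mk _ (X 0)) = Ideal.Quotient.mk _ (X 3) := by simp [hφ]
  have f1 : φ (Ideal.Quotient.mk _ (X 1)) = Ideal.Quotient.mk _ (X 1) := by simp [hφ]
  have f2 : φ (Ideal.Quotient.mk _ (X 2)) = Ideal.Quotient.mk _ (X 2) := by simp [hφ]
  have f3 : φ (Ideal.Quotient.mk _ (X 3)) = Ideal.Quotient.mk _ (X 0 * X 4) := by simp [hφ]
  have hsφ : s.comp φ = φ := by
    apply Ideal.Quotient.algHom_ext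
    apply MvPolynomial.algHom_ext
    intro k
    have hsmul : ∀ p q : HSurf2 (pS5 a b c) pF₁5, ω ^ 2 • p * ω • q = p * q := by
      intro p q
      rw [smul_mul_smul_comm, ← pow_succ, omega_cube, one_smul]
    fin_cases k
    · change s (φ (Ideal.Quotient.mk _ (X 0))) = φ (Ideal.Quotient.mk _ (X 0))
      rw [f0, s3]
    · change s (φ (Ideal.Quotient.mk _ (X 1))) = φ (Ideal.Quotient.mk _ (X 1))
      rw [f1, s1]
    · change s (φ (Ideal.Quotient.mk _ (X 2))) = φ (Ideal.Quotient.mk _ (X 2))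
      rw [f2, s2]
    · change s (φ (Ideal.Quotient.mk _ (X 3))) = φ (Ideal.Quotient.mk _ (X 3))
      rw [f3, map_mul, map_mul, s0, s4, hsmul]
  have hy : φ (Ideal.Quotient.mk _ (X 0 * (X 0 + 1))) =
      (Ideal.Quotient.mk _ (X 4) : HSurf2 (pS5 a b c) pF₁5) ^ 3 := by
    have e : φ (Ideal.Quotient.mk _ (X 0 * (X 0 + 1))) =
      Ideal.Quotient.mk _ (X 3 * (X 3 + 1)) := by simp [hφ]
    rw [e, ← map_pow]
    apply Eq.symm
    rw [Ideal.Quotient.eq]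
    exact Ideal.subset_span (Or.inr rfl)
  have hgen : ∀ r : HSurf2 (pS5 a b c) pF₁5, ∃ n : ℕ, ∃ b₀ b₁ b₂ : HSurf (pY a b c),
      (Ideal.Quotient.mk _ (X 4) : HSurf2 (pS5 a b c) pF₁5) ^ (3 * n) * r =
      φ b₀ + φ b₁ * Ideal.Quotient.mk _ (X 4) + φ b₂ * (Ideal.Quotient.mk _ (X 4)) ^ 2 := by
    intro r
    obtain ⟨p, rfl⟩ := Ideal.Quotient.mk_surjective r
    set y : HSurf (pY a b c) := Ideal.Quotient.mk _ (X 0 * (X 0 + 1))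
    set x : HSurf2 (pS5 a b c) pF₁5 := Ideal.Quotient.mk _ (X 4) with hx
    induction p using MvPolynomial.induction_on with
    | C r =>
      refine ⟨0, algebraMap ℂ _ r, 0, 0, ?_⟩
      rw [AlgHom.commutes]
      simp
      rfl
    | add p q hp hq =>
      obtain ⟨n, a₀, a₁, a₂, h⟩ := hp
      obtain ⟨m, b₀, b₁, b₂, h'⟩ := hq
      refine ⟨n + m, y ^ m * a₀ + y ^ n * b₀, y ^ m * a₁ + y ^ n * b₁,
        y ^ m * a₂ + y ^ n * b₂, ?_⟩
      simp only [map_add, map_mul, map_pow, hy]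
      linear_combination x ^ (3 * m) * h + x ^ (3 * n) * h'
    | mul_X p k hp =>
      obtain ⟨n, a₀, a₁, a₂, h⟩ := hp
      fin_cases k
      · have f3' : φ (Ideal.Quotient.mk _ (X 3)) = Ideal.Quotient.mk _ (X 0) * x := by
          rw [f3, map_mul]
        refine ⟨n + 1, Ideal.Quotient.mk _ (X 3) * a₁ * y, Ideal.Quotient.mk _ (X 3) * a₂ * y,
          Ideal.Quotient.mk _ (X 3) * a₀, ?_⟩
        simp only [map_mul, hy, f3', Fin.zero_eta]
        linear_combination Ideal.Quotient.mk _ (X 0) * x ^ 3 * h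
      · refine ⟨n, Ideal.Quotient.mk _ (X 1) * a₀, Ideal.Quotient.mk _ (X 1) * a₁,
          Ideal.Quotient.mk _ (X 1) * a₂, ?_⟩
        simp only [map_mul, f1, Fin.mk_one]
        linear_combination Ideal.Quotient.mk _ (X 1) * h
      · refine ⟨n, Ideal.Quotient.mk _ (X 2) * a₀, Ideal.Quotient.mk _ (X 2) * a₁,
          Ideal.Quotient.mk _ (X 2) * a₂, ?_⟩
        simp only [map_mul, f2, Fin.reduceFinMk]
        linear_combination Ideal.Quotient.mk _ (X 2) * h
      · refine ⟨n, Ideal.Quotient.mk _ (X 0) * a₀, Ideal.Quotient.mk _ (X 0) * a₁,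
          Ideal.Quotient.mk _ (X 0) * a₂, ?_⟩
        simp only [map_mul, f0, Fin.reduceFinMk]
        linear_combination Ideal.Quotient.mk _ (X 3) * h
      · refine ⟨n, y * a₂, a₀, a₁, ?_⟩
        simp only [map_mul, hy, Fin.reduceFinMk]
        rw [← hx]
        linear_combination x * h
  obtain ⟨σ, hord, hσ, ψ, hψ⟩ := final_abs (K := FractionRing (HSurf2 (pS5 a b c) pF₁5))
    (L := FractionRing (HSurf (pY a b c))) s hs3 φ hφi hsφ _ hx0 s4 _ hy hgen
  have hsmul : ∀ (r : ℂ) (z : HSurf2 (pS5 a b c) pF₁5),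
      algebraMap _ (FractionRing (HSurf2 (pS5 a b c) pF₁5)) (r • z) =
      r • algebraMap _ (FractionRing (HSurf2 (pS5 a b c) pF₁5)) z := by
    intro r z
    exact alg_smul r z
  refine ⟨σ, hord, ?_, ?_, ?_, ?_, ?_, ψ, ?_, ?_, ?_, ?_⟩
  · exact (hσ _).trans ((congrArg _ s0).trans (hsmul _ _))
  · exact (hσ _).trans ((congrArg _ s4).trans (hsmul _ _))
  · exact (hσ _).trans (congrArg _ s1)
  · exact (hσ _).trans (congrArg _ s2)
  · exact (hσ _).trans (congrArg _ s3)
  · exact (hψ _).trans (congrArg _ f3)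
  · exact (hψ _).trans (congrArg _ f0)
  · exact (hψ _).trans (congrArg _ f1)
  · exact (hψ _).trans (congrArg _ f2)
end
end

section
/- Let a, b, c be pairwise distinct elements of ℂ ∖ {0,1}; set u₁ = 1 + u + v, v₁ = a + b·u + c·v, and define the linear polynomials in z: A₁ = (b−z)/(b−c), B₁ = (c−z)/(c−b), and the constants a₁ = (a−b)/(b−c), b₁ = (a−c)/(c−b). Then there is a ℂ-algebra isomorphism φ between the function field of the affine surface S: w³·u₁v₁(v₁−u₁) = u·v (coordinates (w,u,v)) and the function field of the affine surface S₁: w³·t₂³·z(z−1) = (A₁·t₂ + a₁)(B₁·t₂ + b₁) (coordinates (w,t₂,z)), and φ intertwines the order-3 automorphisms given on both sides by w ↦ ω²·w (fixing the other coordinates). An isomorphism is induced by the coordinate change u₁ = t₂, v₁ = t₂·z (solving for u, v), with w unchanged. -/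
/-!
Formalization conventions.

* The function field of an affine variety whose coordinate ring `ℂ[x₁,…,xₙ]/I` is an
  integral domain is formalized as `FractionRing` of that coordinate ring (for the total
  rings of fractions of the rings appearing here this is the function field).
* Two such varieties are birationally equivalent iff their function fields are
  isomorphic as `ℂ`-algebras.
-/

noncomputable section
open MvPolynomial

/-- `u₁ = 1 + u + v` in the coordinates of `S` (`w = X 0`, `u = X 1`, `v = X 2`). -/
def u₁S : MvPolynomial (Fin 3) ℂ := 1 + X 1 + X 2

/-- `v₁ = a + b·u + c·v`. -/
def v₁S (a b c : ℂ) : MvPolynomial (Fin 3) ℂ := C a + C b * X 1 + C c * X 2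

/-- Defining polynomial of the affine surface `S : w³·u₁v₁(v₁−u₁) = u·v`. -/
def pS (a b c : ℂ) : MvPolynomial (Fin 3) ℂ :=
  X 0 ^ 3 * u₁S * v₁S a b c * (v₁S a b c - u₁S) - X 1 * X 2

/-- `A₁ = (b−z)/(b−c)`, a linear polynomial in `z`, in the coordinates of `S₁`
(`w = X 0`, `t₂ = X 1`, `z = X 2`). -/
def A₁ (b c : ℂ) : MvPolynomial (Fin 3) ℂ := C (b - c)⁻¹ * (C b - X 2)

/-- `B₁ = (c−z)/(c−b)`. -/
def B₁ (b c : ℂ) : MvPolynomial (Fin 3) ℂ := C (c - b)⁻¹ * (C c - X 2)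

/-- The constant `a₁ = (a−b)/(b−c)`. -/
def a₁ (a b c : ℂ) : ℂ := (a - b) / (b - c)

/-- The constant `b₁ = (a−c)/(c−b)`. -/
def b₁ (a b c : ℂ) : ℂ := (a - c) / (c - b)

/-- Defining polynomial of the affine surface `S₁ : w³·t₂³·z(z−1) = (A₁t₂+a₁)(B₁t₂+b₁)`. -/
def pS₁ (a b c : ℂ) : MvPolynomial (Fin 3) ℂ :=
  X 0 ^ 3 * X 1 ^ 3 * X 2 * (X 2 - 1)
    - (A₁ b c * X 1 + C (a₁ a b c)) * (B₁ b c * X 1 + C (b₁ a b c))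

theorem frac_ext {n : ℕ} (f : MvPolynomial (Fin n) ℂ) {P : Type} [CommRing P] [Algebra ℂ P]
    (F G : FractionRing (HSurf f) →ₐ[ℂ] P)
    (h : ∀ i, F (cls f (X i)) = G (cls f (X i))) : F = G := by
  apply AlgHom.coe_ringHom_injective
  apply IsLocalization.ringHom_ext (nonZeroDivisors (HSurf f))
  have key : (F.comp (IsScalarTower.toAlgHom ℂ (HSurf f) (FractionRing (HSurf f)))).comp
        (Ideal.Quotient.mkₐ ℂ (Ideal.span {f}))
      = (G.comp (IsScalarTower.toAlgHom ℂ (HSurf f) (FractionRing (HSurf f)))).comp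
        (Ideal.Quotient.mkₐ ℂ (Ideal.span {f})) := by
    apply MvPolynomial.algHom_ext
    intro i
    exact h i
  apply Ideal.Quotient.ringHom_ext
  refine RingHom.ext fun p => ?_
  exact DFunLike.congr_fun key p

theorem away_ext {n : ℕ} (f q : MvPolynomial (Fin n) ℂ) {P : Type} [CommRing P] [Algebra ℂ P]
    (F G : Localization.Away (Ideal.Quotient.mk (Ideal.span {f}) q) →ₐ[ℂ] P)
    (h : ∀ i, F (algebraMap (HSurf f) _ (Ideal.Quotient.mk _ (X i)))
      = G (algebraMap (HSurf f) _ (Ideal.Quotient.mk _ (X i)))) : F = G := by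
  apply AlgHom.coe_ringHom_injective
  apply IsLocalization.ringHom_ext (Submonoid.powers (Ideal.Quotient.mk (Ideal.span {f}) q))
  have key : (F.comp (IsScalarTower.toAlgHom ℂ (HSurf f) (Localization.Away
        (Ideal.Quotient.mk (Ideal.span {f}) q)))).comp (Ideal.Quotient.mkₐ ℂ (Ideal.span {f}))
      = (G.comp (IsScalarTower.toAlgHom ℂ (HSurf f) (Localization.Away
        (Ideal.Quotient.mk (Ideal.span {f}) q)))).comp
        (Ideal.Quotient.mkₐ ℂ (Ideal.span {f})) := by
    apply MvPolynomial.algHom_ext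
    intro i
    exact h i
  apply Ideal.Quotient.ringHom_ext
  refine RingHom.ext fun p => ?_
  exact DFunLike.congr_fun key p

theorem exists_lift {n : ℕ} (f : MvPolynomial (Fin n) ℂ) {P : Type} [CommRing P] [Algebra ℂ P]
    (x : Fin n → P) (h : aeval x f = 0) :
    ∃ F : HSurf f →ₐ[ℂ] P, ∀ p, F (Ideal.Quotient.mk _ p) = aeval x p := by
  refine ⟨Ideal.Quotient.liftₐ (Ideal.span {f}) (aeval x) ?_, fun p => ?_⟩
  · intro a ha
    obtain ⟨k, rfl⟩ := Ideal.mem_span_singleton.1 ha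
    rw [map_mul, h, zero_mul]
  · rfl

theorem exists_lift_away {n : ℕ} (f q : MvPolynomial (Fin n) ℂ) {P : Type} [CommRing P]
    [Algebra ℂ P] (x : Fin n → P) (h : aeval x f = 0) (hq : IsUnit (aeval x q)) :
    ∃ F : Localization.Away (Ideal.Quotient.mk (Ideal.span {f}) q) →ₐ[ℂ] P,
      ∀ p, F (algebraMap (HSurf f) _ (Ideal.Quotient.mk _ p)) = aeval x p := by
  obtain ⟨F, hF⟩ := exists_lift f x h
  have hu : IsUnit (F (Ideal.Quotient.mk (Ideal.span {f}) q)) := by rw [hF]; exact hq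
  refine ⟨IsLocalization.Away.liftAlgHom (Ideal.Quotient.mk (Ideal.span {f}) q) hu, fun p => ?_⟩
  rw [← hF]
  exact IsLocalization.Away.lift_eq _ hu _

theorem nzd {n : ℕ} (f q : MvPolynomial (Fin n) ℂ)
    (s : MvPolynomial (Fin n) ℂ →ₐ[ℂ] MvPolynomial (Fin n) ℂ)
    (hs : ∀ i, q ∣ X i - s (X i)) (hq : s q = 0) (hf : s f ≠ 0) (hq0 : q ≠ 0) :
    Ideal.Quotient.mk (Ideal.span {f}) q ∈ nonZeroDivisors (HSurf f) := by
  have hdiv : ∀ g, q ∣ g - s g := by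
    intro g
    induction g using MvPolynomial.induction_on with
    | C a => simp [← MvPolynomial.algebraMap_eq]
    | add p r hp hr =>
      rw [map_add, add_sub_add_comm]
      exact dvd_add hp hr
    | mul_X p i hp =>
      have : p * X i - s (p * X i) = (p - s p) * X i + s p * (X i - s (X i)) := by
        rw [map_mul]; ring
      rw [this]
      exact dvd_add (hp.mul_right _) ((hs i).mul_left _)
  rw [mem_nonZeroDivisors_iff_right]
  intro g hg
  obtain ⟨g, rfl⟩ := Ideal.Quotient.mk_surjective g
  rw [← map_mul, Ideal.Quotient.eq_zero_iff_mem, Ideal.mem_span_singleton] at hg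
  obtain ⟨h, hh⟩ := hg
  have h1 : s f * s h = 0 := by rw [← map_mul, ← hh, map_mul, hq, mul_zero]
  have h2 : s h = 0 := (mul_eq_zero.1 h1).resolve_left hf
  have h3 := hdiv h
  rw [h2, sub_zero] at h3
  obtain ⟨k, rfl⟩ := h3
  rw [Ideal.Quotient.eq_zero_iff_mem, Ideal.mem_span_singleton]
  refine ⟨k, mul_left_cancel₀ hq0 ?_⟩
  linear_combination hh

theorem frac_equiv {R S : Type} [CommRing R] [CommRing S] [Algebra ℂ R] [Algebra ℂ S]
    (x : R) (y : S) (hx : x ∈ nonZeroDivisors R) (hy : y ∈ nonZeroDivisors S)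
    (e : Localization.Away x ≃ₐ[ℂ] Localization.Away y) :
    ∃ φ : FractionRing R ≃ₐ[ℂ] FractionRing S, ∀ r s,
      e (algebraMap R _ r) = algebraMap S _ s →
      φ (algebraMap R _ r) = algebraMap S _ s := by
  have hx' : Submonoid.powers x ≤ nonZeroDivisors R := by
    rw [Submonoid.powers_le]; exact hx
  have hy' : Submonoid.powers y ≤ nonZeroDivisors S := by
    rw [Submonoid.powers_le]; exact hy
  let i1 : Algebra (Localization.Away x) (FractionRing R) :=
    IsLocalization.localizationAlgebraOfSubmonoidLe _ _ (Submonoid.powers x) (nonZeroDivisors R) hx'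
  let i2 : Algebra (Localization.Away y) (FractionRing S) :=
    IsLocalization.localizationAlgebraOfSubmonoidLe _ _ (Submonoid.powers y) (nonZeroDivisors S) hy'
  have t1 : IsScalarTower R (Localization.Away x) (FractionRing R) :=
    IsLocalization.localization_isScalarTower_of_submonoid_le _ _ (Submonoid.powers x)
      (nonZeroDivisors R) hx'
  have t2 : IsScalarTower S (Localization.Away y) (FractionRing S) :=
    IsLocalization.localization_isScalarTower_of_submonoid_le _ _ (Submonoid.powers y)
      (nonZeroDivisors S) hy'
  have f1 : IsFractionRing (Localization.Away x) (FractionRing R) :=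
    IsFractionRing.isFractionRing_of_isLocalization (Submonoid.powers x) _ _ hx'
  have f2 : IsFractionRing (Localization.Away y) (FractionRing S) :=
    IsFractionRing.isFractionRing_of_isLocalization (Submonoid.powers y) _ _ hy'
  have s1 : IsScalarTower ℂ (Localization.Away x) (FractionRing R) :=
    IsScalarTower.of_algebraMap_eq fun z => by
      rw [IsScalarTower.algebraMap_apply ℂ R (FractionRing R),
        IsScalarTower.algebraMap_apply ℂ R (Localization.Away x),
        ← IsScalarTower.algebraMap_apply R (Localization.Away x) (FractionRing R)]
  have s2 : IsScalarTower ℂ (Localization.Away y) (FractionRing S) :=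
    IsScalarTower.of_algebraMap_eq fun z => by
      rw [IsScalarTower.algebraMap_apply ℂ S (FractionRing S),
        IsScalarTower.algebraMap_apply ℂ S (Localization.Away y),
        ← IsScalarTower.algebraMap_apply S (Localization.Away y) (FractionRing S)]
  refine ⟨IsFractionRing.algEquivOfAlgEquiv e, fun r s h => ?_⟩
  rw [IsScalarTower.algebraMap_apply R (Localization.Away x) (FractionRing R),
    IsFractionRing.algEquivOfAlgEquiv_algebraMap, h,
    ← IsScalarTower.algebraMap_apply S (Localization.Away y) (FractionRing S)]

theorem equiv_smul {R S : Type} [CommRing R] [CommRing S] [Algebra ℂ R] [Algebra ℂ S]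
    (φ : R ≃ₐ[ℂ] S) (t : ℂ) (x : R) : φ (t • x) = t • φ x := map_smul φ t x

theorem omega_prim : IsPrimitiveRoot ω 3 := by
  have := Complex.isPrimitiveRoot_exp 3 (by norm_num)
  simpa [ω] using this

theorem cls_smul {n : ℕ} (f p : MvPolynomial (Fin n) ℂ) (t : ℂ) :
    cls f (C t * p) = t • cls f p := by
  rw [← MvPolynomial.smul_eq_C_mul]
  exact map_smul ((IsScalarTower.toAlgHom ℂ (HSurf f) (FractionRing (HSurf f))).comp
        (Ideal.Quotient.mkₐ ℂ (Ideal.span {f}))) t p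

theorem exists_sigma_s4 (f : MvPolynomial (Fin 3) ℂ)
    (hf : ∀ t : ℂ, t ^ 3 = 1 →
      aeval (![C t * X 0, X 1, X 2] : Fin 3 → MvPolynomial (Fin 3) ℂ) f = f)
    (pt : Fin 3 → ℂ) (hpt : eval pt f = 0) (h0 : pt 0 ≠ 0) :
    ∃ σ : FractionRing (HSurf f) ≃ₐ[ℂ] FractionRing (HSurf f), orderOf σ = 3 ∧
      σ (cls f (X 0)) = (ω ^ 2 : ℂ) • cls f (X 0) ∧
      σ (cls f (X 1)) = cls f (X 1) ∧ σ (cls f (X 2)) = cls f (X 2) := by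
  have h3 : ω ^ 3 = 1 := omega_prim.pow_eq_one
  have hl : ∀ t : ℂ, t ^ 3 = 1 → ∃ F : HSurf f →ₐ[ℂ] HSurf f, ∀ p,
      F (Ideal.Quotient.mk _ p) = Ideal.Quotient.mk _
        (aeval (![C t * X 0, X 1, X 2] : Fin 3 → MvPolynomial (Fin 3) ℂ) p) := by
    intro t ht
    have hc : ∀ p : MvPolynomial (Fin 3) ℂ, aeval (fun i => Ideal.Quotient.mk (Ideal.span {f})
        ((![C t * X 0, X 1, X 2] : Fin 3 → MvPolynomial (Fin 3) ℂ) i)) p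
        = Ideal.Quotient.mk (Ideal.span {f})
        (aeval (![C t * X 0, X 1, X 2] : Fin 3 → MvPolynomial (Fin 3) ℂ) p) := by
      intro p
      exact (MvPolynomial.comp_aeval_apply (φ := Ideal.Quotient.mkₐ ℂ (Ideal.span {f})) _ p).symm
    obtain ⟨F, hF⟩ := exists_lift f (fun i => Ideal.Quotient.mk (Ideal.span {f})
        ((![C t * X 0, X 1, X 2] : Fin 3 → MvPolynomial (Fin 3) ℂ) i)) (by
          rw [hc, hf t ht, Ideal.Quotient.eq_zero_iff_mem]
          exact Ideal.mem_span_singleton_self f)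
    exact ⟨F, fun p => by rw [hF, hc]⟩
  obtain ⟨F, hF⟩ := hl (ω ^ 2) (by rw [← pow_mul, mul_comm, pow_mul, h3, one_pow])
  obtain ⟨G, hG⟩ := hl ω h3
  have hC : C (ω ^ 2) * C ω = (1 : MvPolynomial (Fin 3) ℂ) := by
    rw [← C_mul, ← pow_succ, h3, C_1]
  have hFG : F.comp G = AlgHom.id ℂ _ := by
    apply Ideal.Quotient.algHom_ext
    apply MvPolynomial.algHom_ext
    intro i
    change F (G (Ideal.Quotient.mk _ (X i))) = Ideal.Quotient.mk _ (X i)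
    rw [hG, hF]
    congr 1
    fin_cases i
    · simp only [Fin.zero_eta, aeval_X, map_mul, aeval_C, algebraMap_eq, Matrix.cons_val_zero]
      linear_combination X 0 * hC
    · simp
    · simp
  have hGF : G.comp F = AlgHom.id ℂ _ := by
    apply Ideal.Quotient.algHom_ext
    apply MvPolynomial.algHom_ext
    intro i
    change G (F (Ideal.Quotient.mk _ (X i))) = Ideal.Quotient.mk _ (X i)
    rw [hF, hG]
    congr 1
    fin_cases i
    · simp only [Fin.zero_eta, aeval_X, map_mul, aeval_C, algebraMap_eq, Matrix.cons_val_zero]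
      linear_combination X 0 * hC
    · simp
    · simp
  let e : HSurf f ≃ₐ[ℂ] HSurf f := AlgEquiv.ofAlgHom F G hFG hGF
  let σ : FractionRing (HSurf f) ≃ₐ[ℂ] FractionRing (HSurf f) :=
    IsFractionRing.algEquivOfAlgEquiv e
  have hσ : ∀ p, σ (cls f p) = cls f
      (aeval (![C (ω ^ 2) * X 0, X 1, X 2] : Fin 3 → MvPolynomial (Fin 3) ℂ) p) := by
    intro p
    have : σ (cls f p) = algebraMap _ _ (e (Ideal.Quotient.mk _ p)) :=
      IsFractionRing.algEquivOfAlgEquiv_algebraMap e _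
    rw [this]
    change algebraMap _ _ (F (Ideal.Quotient.mk _ p)) = _
    rw [hF]; rfl
  have hs0 : σ (cls f (X 0)) = (ω ^ 2 : ℂ) • cls f (X 0) := by
    rw [hσ, ← cls_smul]; simp
  have hs1 : σ (cls f (X 1)) = cls f (X 1) := by
    rw [hσ]; simp
  have hs2 : σ (cls f (X 2)) = cls f (X 2) := by
    rw [hσ]; simp
  refine ⟨σ, ?_, hs0, hs1, hs2⟩
  have : Fact (Nat.Prime 3) := ⟨by norm_num⟩
  apply orderOf_eq_prime
  · have hh : (σ ^ 3).toAlgHom = AlgHom.id ℂ _ := by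
      apply frac_ext
      intro i
      change σ (σ (σ (cls f (X i)))) = cls f (X i)
      fin_cases i
      · change σ (σ (σ (cls f (X 0)))) = cls f (X 0)
        rw [hs0, map_smul, map_smul, hs0, map_smul, hs0, smul_smul, smul_smul]
        have : ω ^ 2 * ω ^ 2 * ω ^ 2 = 1 := by
          linear_combination (ω ^ 3 + 1) * h3
        rw [this, one_smul]
      · change σ (σ (σ (cls f (X 1)))) = cls f (X 1)
        rw [hs1, hs1, hs1]
      · change σ (σ (σ (cls f (X 2)))) = cls f (X 2)
        rw [hs2, hs2, hs2]
    ext z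
    exact DFunLike.congr_fun hh z
  · intro h1
    rw [h1, ← cls_smul] at hs0
    have h4 : Ideal.Quotient.mk (Ideal.span {f}) (X 0)
        = Ideal.Quotient.mk (Ideal.span {f}) (C (ω ^ 2) * X 0) :=
      IsFractionRing.injective (HSurf f) (FractionRing (HSurf f)) hs0
    rw [Ideal.Quotient.eq, Ideal.mem_span_singleton] at h4
    obtain ⟨k, hk⟩ := h4
    have h5 := congrArg (eval pt) hk
    rw [map_mul, hpt, zero_mul] at h5
    simp only [map_sub, map_mul, eval_X, eval_C] at h5
    have h6 : ω ^ 2 = 1 := by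
      apply mul_right_cancel₀ h0
      linear_combination -h5
    exact omega_prim.pow_ne_one_of_pos_of_lt (by norm_num) (by norm_num) h6

theorem pS_nzd (a b c : ℂ) :
    Ideal.Quotient.mk (Ideal.span {pS a b c}) u₁S ∈ nonZeroDivisors (HSurf (pS a b c)) := by
  apply nzd _ _ (aeval (![X 0, X 1, - 1 - X 1] : Fin 3 → MvPolynomial (Fin 3) ℂ))
  · intro i
    fin_cases i
    · simp
    · simp
    · refine ⟨1, ?_⟩
      simp [u₁S]
      ring
  · simp [u₁S]
  · intro h
    have := congrArg (eval (![0, 1, 0] : Fin 3 → ℂ)) h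
    simp [pS] at this
  · intro h
    have := congrArg (eval (![0, 0, 0] : Fin 3 → ℂ)) h
    simp [u₁S] at this

theorem pS₁_nzd (a b c : ℂ) (hab : a ≠ b) (hac : a ≠ c) (hbc : b ≠ c) :
    Ideal.Quotient.mk (Ideal.span {pS₁ a b c}) (X 1) ∈ nonZeroDivisors (HSurf (pS₁ a b c)) := by
  apply nzd _ _ (aeval (![X 0, 0, X 2] : Fin 3 → MvPolynomial (Fin 3) ℂ))
  · intro i
    fin_cases i
    · simp
    · simp
    · simp
  · simp
  · intro h
    have := congrArg (eval (![0, 0, 0] : Fin 3 → ℂ)) h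
    simp [pS₁, a₁, b₁, sub_eq_zero, hab, hac, hbc, hbc.symm] at this
  · exact X_ne_zero _

theorem smul_alg {P : Type} [CommRing P] [Algebra ℂ P] (x y : ℂ) (h : x * y = 1) :
    algebraMap ℂ P x * algebraMap ℂ P y = 1 := by
  rw [← map_mul, h, map_one]

theorem core_equiv (a b c : ℂ) (hbc : b ≠ c) {R S : Type} [CommRing R] [CommRing S]
    [Algebra ℂ R] [Algebra ℂ S] (α : MvPolynomial (Fin 3) ℂ →ₐ[ℂ] R)
    (β : MvPolynomial (Fin 3) ℂ →ₐ[ℂ] S) (hα0 : α (pS₁ a b c) = 0) (hβ0 : β (pS a b c) = 0)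
    (hαu : IsUnit (α (X 1))) (hβu : IsUnit (β u₁S))
    (liftR : ∀ x : Fin 3 → S, aeval x (pS₁ a b c) = 0 →
      IsUnit (aeval x (X 1 : MvPolynomial (Fin 3) ℂ)) →
      ∃ F : R →ₐ[ℂ] S, ∀ p, F (α p) = aeval x p)
    (liftS : ∀ x : Fin 3 → R, aeval x (pS a b c) = 0 → IsUnit (aeval x u₁S) →
      ∃ F : S →ₐ[ℂ] R, ∀ p, F (β p) = aeval x p)
    (extR : ∀ F G : R →ₐ[ℂ] R, (∀ j, F (α (X j)) = G (α (X j))) → F = G)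
    (extS : ∀ F G : S →ₐ[ℂ] S, (∀ j, F (β (X j)) = G (β (X j))) → F = G) :
    ∃ e : R ≃ₐ[ℂ] S, e (α (X 0)) = β (X 0) ∧ e (α (X 1)) = β u₁S ∧
      e (α (X 2 * X 1)) = β (v₁S a b c) := by
  have hαC : ∀ z, α (C z) = algebraMap ℂ R z := fun z => α.commutes z
  have hβC : ∀ z, β (C z) = algebraMap ℂ S z := fun z => β.commutes z
  obtain ⟨i, hi⟩ := hβu.exists_right_inv
  have hbc' : b - c ≠ 0 := sub_ne_zero.2 hbc
  have hcb' : c - b ≠ 0 := sub_ne_zero.2 hbc.symm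
  have hneg : (c - b)⁻¹ = - (b - c)⁻¹ := by rw [← inv_neg, neg_sub]
  have hdR : (algebraMap ℂ R b - algebraMap ℂ R c) * algebraMap ℂ R (b - c)⁻¹ = 1 := by
    rw [← map_sub]; exact smul_alg _ _ (mul_inv_cancel₀ hbc')
  have hdS : (algebraMap ℂ S b - algebraMap ℂ S c) * algebraMap ℂ S (b - c)⁻¹ = 1 := by
    rw [← map_sub]; exact smul_alg _ _ (mul_inv_cancel₀ hbc')
  have hu : β u₁S = 1 + β (X 1) + β (X 2) := by simp [u₁S]
  have hv : β (v₁S a b c) = algebraMap ℂ S a + algebraMap ℂ S b * β (X 1)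
      + algebraMap ℂ S c * β (X 2) := by
    simp only [v₁S, map_add, map_mul, hβC]
  -- forward
  let x : Fin 3 → S := ![β (X 0), β u₁S, β (v₁S a b c) * i]
  have hvi : β (v₁S a b c) * i * β u₁S = β (v₁S a b c) := by linear_combination β (v₁S a b c) * hi
  have hAx : aeval x (A₁ b c * X 1 + C (a₁ a b c)) = β (X 2) := by
    simp only [A₁, a₁, div_eq_mul_inv, map_add, map_mul, map_sub, aeval_X, aeval_C, x,
      Matrix.cons_val]
    linear_combination (-algebraMap ℂ S (b-c)⁻¹) * hvi
      + β (X 2) * hdS + algebraMap ℂ S (b-c)⁻¹ * algebraMap ℂ S b * hu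
      - algebraMap ℂ S (b-c)⁻¹ * hv
  have hBx : aeval x (B₁ b c * X 1 + C (b₁ a b c)) = β (X 1) := by
    simp only [B₁, b₁, div_eq_mul_inv, hneg, map_neg, map_add, map_mul, map_sub, aeval_X, aeval_C,
      x, Matrix.cons_val]
    linear_combination (algebraMap ℂ S (b-c)⁻¹) * hvi
      + β (X 1) * hdS - algebraMap ℂ S (b-c)⁻¹ * algebraMap ℂ S c * hu
      + algebraMap ℂ S (b-c)⁻¹ * hv
  have hxf : aeval x (pS₁ a b c) = 0 := by
    rw [pS₁, map_sub, map_mul _ (A₁ b c * X 1 + C (a₁ a b c)), hAx, hBx]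
    simp only [map_mul, map_sub, map_pow, aeval_X, map_one, x, Matrix.cons_val]
    rw [pS] at hβ0
    simp only [map_mul, map_sub, map_pow] at hβ0
    set U := β u₁S
    set V := β (v₁S a b c)
    linear_combination hβ0 + β (X 0) ^ 3 * U * (V * (U * i + 1) - U) * V * hi
  obtain ⟨F, hF⟩ := liftR x hxf (by
    simpa only [aeval_X, x, Matrix.cons_val] using hβu)
  -- backward
  let y : Fin 3 → R := ![α (X 0), α (B₁ b c * X 1 + C (b₁ a b c)),
    α (A₁ b c * X 1 + C (a₁ a b c))]
  have hyu : aeval y u₁S = α (X 1) := by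
    simp only [u₁S, A₁, B₁, a₁, b₁, div_eq_mul_inv, hneg, map_neg, map_one, map_add, map_mul,
      map_sub, aeval_X, hαC, y, Matrix.cons_val]
    linear_combination (α (X 1) - 1) * hdR
  have hyv : aeval y (v₁S a b c) = α (X 2) * α (X 1) := by
    simp only [v₁S, A₁, B₁, a₁, b₁, div_eq_mul_inv, hneg, map_neg, map_one, map_add, map_mul,
      map_sub, aeval_X, aeval_C, hαC, y, Matrix.cons_val]
    linear_combination (α (X 1) * α (X 2) - algebraMap ℂ R a) * hdR
  have hyf : aeval y (pS a b c) = 0 := by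
    simp only [pS, map_sub, map_mul, map_pow, hyu, hyv]
    simp only [aeval_X, y, Matrix.cons_val]
    have h := hα0
    rw [pS₁, map_sub, map_mul _ (A₁ b c * X 1 + C (a₁ a b c))] at h
    simp only [map_mul _ (_ * _) _, map_mul _ (_ ^ _) _, map_pow] at h
    rw [map_sub α (X 2) 1, map_one] at h
    linear_combination h
  obtain ⟨G, hG⟩ := liftS y hyf (by rw [hyu]; exact hαu)
  have hF' : ∀ p, F (α p) = aeval x p := hF
  have hG' : ∀ p, G (β p) = aeval y p := hG
  have hFG : F.comp G = AlgHom.id ℂ _ := by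
    apply extS
    intro j
    change F (G (β (X j))) = β (X j)
    rw [hG', aeval_X]
    fin_cases j
    · change F (α (X 0)) = β (X 0)
      rw [hF', aeval_X]; rfl
    · change F (α _) = β (X 1)
      rw [hF', hBx]
    · change F (α _) = β (X 2)
      rw [hF', hAx]
  have hGF : G.comp F = AlgHom.id ℂ _ := by
    apply extR
    intro j
    change G (F (α (X j))) = α (X j)
    rw [hF', aeval_X]
    fin_cases j
    · change G (β (X 0)) = α (X 0)
      rw [hG', aeval_X]; rfl
    · change G (β _) = α (X 1)
      rw [hG', hyu]
    · change G (β _ * i) = α (X 2)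
      have h1 := congrArg G hvi
      rw [map_mul, hG', hG', hyu, hyv] at h1
      exact hαu.mul_right_cancel h1
  refine ⟨AlgEquiv.ofAlgHom F G hFG hGF, ?_, ?_, ?_⟩
  · change F (α (X 0)) = β (X 0)
    rw [hF', aeval_X]; rfl
  · change F (α (X 1)) = β _
    rw [hF', aeval_X]; rfl
  · change F (α (X 2 * X 1)) = β _
    rw [hF', map_mul, aeval_X, aeval_X]; exact hvi

theorem away_equiv (a b c : ℂ) (hbc : b ≠ c) :
    ∃ e : Localization.Away (Ideal.Quotient.mk (Ideal.span {pS₁ a b c}) (X 1)) ≃ₐ[ℂ]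
      Localization.Away (Ideal.Quotient.mk (Ideal.span {pS a b c}) u₁S),
      e (algebraMap (HSurf (pS₁ a b c)) _ (Ideal.Quotient.mk _ (X 0)))
        = algebraMap (HSurf (pS a b c)) _ (Ideal.Quotient.mk _ (X 0)) ∧
      e (algebraMap (HSurf (pS₁ a b c)) _ (Ideal.Quotient.mk _ (X 1)))
        = algebraMap (HSurf (pS a b c)) _ (Ideal.Quotient.mk _ u₁S) ∧
      e (algebraMap (HSurf (pS₁ a b c)) _ (Ideal.Quotient.mk _ (X 2 * X 1)))
        = algebraMap (HSurf (pS a b c)) _ (Ideal.Quotient.mk _ (v₁S a b c)) := by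
  set R := Localization.Away (Ideal.Quotient.mk (Ideal.span {pS₁ a b c}) (X 1)) with hR
  set S := Localization.Away (Ideal.Quotient.mk (Ideal.span {pS a b c}) u₁S) with hS
  -- canonical maps
  let α : MvPolynomial (Fin 3) ℂ →ₐ[ℂ] R :=
    (IsScalarTower.toAlgHom ℂ (HSurf (pS₁ a b c)) R).comp (Ideal.Quotient.mkₐ ℂ _)
  let β : MvPolynomial (Fin 3) ℂ →ₐ[ℂ] S :=
    (IsScalarTower.toAlgHom ℂ (HSurf (pS a b c)) S).comp (Ideal.Quotient.mkₐ ℂ _)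
  have hα0 : α (pS₁ a b c) = 0 := by
    have : Ideal.Quotient.mk (Ideal.span {pS₁ a b c}) (pS₁ a b c) = 0 :=
      Ideal.Quotient.eq_zero_iff_mem.2 (Ideal.mem_span_singleton_self _)
    change algebraMap (HSurf (pS₁ a b c)) R (Ideal.Quotient.mk _ _) = 0
    rw [this, map_zero]
  have hβ0 : β (pS a b c) = 0 := by
    have : Ideal.Quotient.mk (Ideal.span {pS a b c}) (pS a b c) = 0 :=
      Ideal.Quotient.eq_zero_iff_mem.2 (Ideal.mem_span_singleton_self _)
    change algebraMap (HSurf (pS a b c)) S (Ideal.Quotient.mk _ _) = 0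
    rw [this, map_zero]
  have hαu : IsUnit (α (X 1)) :=
    IsLocalization.Away.algebraMap_isUnit (Ideal.Quotient.mk (Ideal.span {pS₁ a b c}) (X 1))
  have hβu : IsUnit (β u₁S) :=
    IsLocalization.Away.algebraMap_isUnit (Ideal.Quotient.mk (Ideal.span {pS a b c}) u₁S)
  exact core_equiv a b c hbc α β hα0 hβ0 hαu hβu (fun x => exists_lift_away _ _ x)
    (fun x => exists_lift_away _ _ x) (away_ext _ _) (away_ext _ _)

/-- For pairwise distinct `a, b, c ∈ ℂ ∖ {0,1}` there is a `ℂ`-algebra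
isomorphism between the function fields of `S` and `S₁` intertwining the order-3
automorphisms `w ↦ ω²·w` (fixing the other coordinates) on both sides; an isomorphism
is induced by the coordinate change `u₁ = t₂`, `v₁ = t₂·z` (solving for `u, v`), with `w`
unchanged.  (We record the induced isomorphism in the direction
`φ : Frac(S₁) → Frac(S)`, `t₂ ↦ u₁`, `z ↦ v₁/u₁` — denominator-free:
`φ(z)·u₁ = v₁` — and `w ↦ w`.) -/
theorem stmt4 (a b c : ℂ) (ha0 : a ≠ 0) (ha1 : a ≠ 1) (hb0 : b ≠ 0) (hb1 : b ≠ 1)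
    (hc0 : c ≠ 0) (hc1 : c ≠ 1) (hab : a ≠ b) (hac : a ≠ c) (hbc : b ≠ c) :
    ∃ (φ : FractionRing (HSurf (pS₁ a b c)) ≃ₐ[ℂ] FractionRing (HSurf (pS a b c)))
      (σ : FractionRing (HSurf (pS a b c)) ≃ₐ[ℂ] FractionRing (HSurf (pS a b c)))
      (σ₁ : FractionRing (HSurf (pS₁ a b c)) ≃ₐ[ℂ] FractionRing (HSurf (pS₁ a b c))),
      orderOf σ = 3 ∧
      σ (cls (pS a b c) (X 0)) = (ω ^ 2 : ℂ) • cls (pS a b c) (X 0) ∧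
      σ (cls (pS a b c) (X 1)) = cls (pS a b c) (X 1) ∧
      σ (cls (pS a b c) (X 2)) = cls (pS a b c) (X 2) ∧
      orderOf σ₁ = 3 ∧
      σ₁ (cls (pS₁ a b c) (X 0)) = (ω ^ 2 : ℂ) • cls (pS₁ a b c) (X 0) ∧
      σ₁ (cls (pS₁ a b c) (X 1)) = cls (pS₁ a b c) (X 1) ∧
      σ₁ (cls (pS₁ a b c) (X 2)) = cls (pS₁ a b c) (X 2) ∧
      (∀ k, φ (σ₁ k) = σ (φ k)) ∧
      φ (cls (pS₁ a b c) (X 0)) = cls (pS a b c) (X 0) ∧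
      φ (cls (pS₁ a b c) (X 1)) = cls (pS a b c) u₁S ∧
      φ (cls (pS₁ a b c) (X 2)) * cls (pS a b c) u₁S = cls (pS a b c) (v₁S a b c) := by
  obtain ⟨e, he0, he1, he2⟩ := away_equiv a b c hbc
  obtain ⟨φ, hφ⟩ := frac_equiv _ _ (pS₁_nzd a b c hab hac hbc) (pS_nzd a b c) e
  have hφ0 : φ (cls (pS₁ a b c) (X 0)) = cls (pS a b c) (X 0) := hφ _ _ he0
  have hφ1 : φ (cls (pS₁ a b c) (X 1)) = cls (pS a b c) u₁S := hφ _ _ he1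
  have hφ2 : φ (cls (pS₁ a b c) (X 2)) * cls (pS a b c) u₁S = cls (pS a b c) (v₁S a b c) := by
    have h : φ (cls (pS₁ a b c) (X 2 * X 1)) = cls (pS a b c) (v₁S a b c) := hφ _ _ he2
    have h' : cls (pS₁ a b c) (X 2 * X 1) = cls (pS₁ a b c) (X 2) * cls (pS₁ a b c) (X 1) := by
      simp only [cls, map_mul]
    rw [← h, h', map_mul, hφ1]
  obtain ⟨σ, hσ, hσ0, hσ1, hσ2⟩ := exists_sigma_s4 (pS a b c) (by
      intro t ht
      have hC : (C t : MvPolynomial (Fin 3) ℂ) ^ 3 = 1 := by rw [← C_pow, ht, C_1]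
      simp only [pS, u₁S, v₁S, map_sub, map_mul, map_pow, map_add, map_one, aeval_X, aeval_C,
        Matrix.cons_val, algebraMap_eq, mul_pow, hC, one_mul])
    ![1, 0, -1] (by simp [pS, u₁S]) (by simp)
  obtain ⟨σ₁, hσ₁, hσ₁0, hσ₁1, hσ₁2⟩ := exists_sigma_s4 (pS₁ a b c) (by
      intro t ht
      have hC : (C t : MvPolynomial (Fin 3) ℂ) ^ 3 = 1 := by rw [← C_pow, ht, C_1]
      simp only [pS₁, A₁, B₁, map_sub, map_mul, map_pow, map_add, map_one, aeval_X, aeval_C,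
        Matrix.cons_val, algebraMap_eq, mul_pow, hC, one_mul])
    ![1, (b - a) / b, 0] (by
      have : (b - c)⁻¹ * b * ((b - a) / b) + (a - b) / (b - c) = 0 := by
        have := sub_ne_zero.2 hbc
        field_simp
        ring
      simp [pS₁, A₁, a₁, this]) (by simp)
  refine ⟨φ, σ, σ₁, hσ, hσ0, hσ1, hσ2, hσ₁, hσ₁0, hσ₁1, hσ₁2, ?_, hφ0, hφ1, hφ2⟩
  have hadd : cls (pS a b c) u₁S = 1 + cls (pS a b c) (X 1) + cls (pS a b c) (X 2) := by
    simp only [cls, u₁S, map_add, map_one]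
  have hσu : σ (cls (pS a b c) u₁S) = cls (pS a b c) u₁S := by
    rw [hadd, map_add, map_add, map_one, hσ1, hσ2]
  have hσv : σ (cls (pS a b c) (v₁S a b c)) = cls (pS a b c) (v₁S a b c) := by
    have hvv : cls (pS a b c) (v₁S a b c) = a • 1 + b • cls (pS a b c) (X 1)
        + c • cls (pS a b c) (X 2) := by
      rw [← cls_smul, ← cls_smul]
      have h1 : a • (1 : FractionRing (HSurf (pS a b c))) = cls (pS a b c) (C a) := by
        have := cls_smul (pS a b c) 1 a
        rw [mul_one] at this
        rw [this]
        simp only [cls, map_one]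
      rw [h1]
      simp only [cls, v₁S, map_add]
    rw [hvv, map_add, map_add, map_smul, map_smul, map_smul, map_one, hσ1, hσ2]
  have hunit : IsUnit (cls (pS a b c) u₁S) :=
    IsLocalization.map_units (FractionRing (HSurf (pS a b c)))
      (⟨_, pS_nzd a b c⟩ : nonZeroDivisors (HSurf (pS a b c)))
  have hh : φ.toAlgHom.comp σ₁.toAlgHom = σ.toAlgHom.comp φ.toAlgHom := by
    apply frac_ext
    intro j
    change φ (σ₁ (cls _ (X j))) = σ (φ (cls _ (X j)))
    fin_cases j
    · change φ (σ₁ (cls _ (X 0))) = σ (φ (cls _ (X 0)))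
      rw [hσ₁0, hφ0, hσ0, ← hφ0]
      exact equiv_smul φ _ _
    · change φ (σ₁ (cls _ (X 1))) = σ (φ (cls _ (X 1)))
      rw [hσ₁1, hφ1, hσu]
    · change φ (σ₁ (cls _ (X 2))) = σ (φ (cls _ (X 2)))
      rw [hσ₁2]
      apply hunit.mul_right_cancel
      rw [hφ2]
      have := congrArg σ hφ2
      rw [map_mul, hσu, hσv] at this
      exact this.symm
  intro k
  exact DFunLike.congr_fun hh k
end
end
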